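/- Positivity and boundedness: let h > 0, let (U_λ, b_λ) be a time-independent lower solution and (W̄, b̄) with W̄(η) = (b̄/2)(b̄−η) a time-independent upper solution of problem (2.1) with data (h, u_0, b_0), so that U_λ ≤ u_0 ≤ W̄ (extended by zero) and b_λ ≤ b_0 ≤ b̄. Let (W, b), (W_low, b_low), (W_up, b_up) be the classical solutions of (2.1) with initial data (u_0, b_0), (U_λ, b_λ), and (W̄, b̄) respectively, each extended by zero beyond the free boundary. Then for all η ≥ 0 and τ ≥ 0: 0 ≤ U_λ(η) ≤ W_low(η, τ) ≤ W(η, τ) ≤ W_up(η, τ) ≤ W̄(η) ≤ b̄²/2, and 0 < b_λ ≤ b_low(τ) ≤ b(τ) ≤ b_up(τ) ≤ b̄. -/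

import Mathlib

/-- `(W, b)` is a classical solution of problem (2.1) (the Stefan problem in
self-similar variables) with flux `h` and initial data `(u0, b0)`. -/
def IsClassicalSol21 (h b0 : ℝ) (u0 : ℝ → ℝ) (W : ℝ → ℝ → ℝ) (b : ℝ → ℝ) : Prop :=
  ContDiffOn ℝ 1 b (Set.Ici 0) ∧ b 0 = b0 ∧
  ContinuousOn (fun p : ℝ × ℝ => W p.1 p.2)
    {p : ℝ × ℝ | 0 ≤ p.2 ∧ 0 ≤ p.1 ∧ p.1 ≤ b p.2} ∧
  ContinuousOn (fun p : ℝ × ℝ => deriv (fun y => W y p.2) p.1)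
    {p : ℝ × ℝ | 0 < p.2 ∧ 0 ≤ p.1 ∧ p.1 ≤ b p.2} ∧
  (∀ τ > (0:ℝ), ∀ η, 0 < η → η < b τ →
    DifferentiableAt ℝ (fun σ => W η σ) τ ∧
    DifferentiableAt ℝ (fun y => W y τ) η ∧
    DifferentiableAt ℝ (deriv (fun y => W y τ)) η ∧
    deriv (fun σ => W η σ) τ - deriv (deriv (fun y => W y τ)) η
      - η / 2 * deriv (fun y => W y τ) η = 0) ∧
  (∀ τ > (0:ℝ), -deriv (fun y => W y τ) 0 = h) ∧
  (∀ τ > (0:ℝ), W (b τ) τ = 0) ∧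
  (∀ τ > (0:ℝ), deriv b τ + b τ / 2 = -deriv (fun y => W y τ) (b τ)) ∧
  (∀ η, 0 < η → η < b0 → W η 0 = u0 η)

/-- A time-independent lower solution of (2.1) with data `(h, u0, b0)`. -/
def IsTIStatLowerSol (h b0 : ℝ) (u0 : ℝ → ℝ) (W : ℝ → ℝ) (b : ℝ) : Prop :=
  (∀ η ∈ Set.Ioo 0 b, -(deriv (deriv W) η + η / 2 * deriv W η) ≤ 0) ∧
  (-deriv W 0 ≤ h) ∧ (W b = 0) ∧ (b / 2 ≤ -deriv W b) ∧ (b ≤ b0) ∧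
  (∀ η ∈ Set.Icc 0 b, W η ≤ u0 η)

/-- A time-independent upper solution of (2.1) with data `(h, u0, b0)`. -/
def IsTIStatUpperSol (h b0 : ℝ) (u0 : ℝ → ℝ) (W : ℝ → ℝ) (b : ℝ) : Prop :=
  (∀ η ∈ Set.Ioo 0 b, 0 ≤ -(deriv (deriv W) η + η / 2 * deriv W η)) ∧
  (h ≤ -deriv W 0) ∧ (W b = 0) ∧ (-deriv W b ≤ b / 2) ∧ (b0 ≤ b) ∧
  (∀ η ∈ Set.Icc 0 b, u0 η ≤ W η)

section
open Set Filter Topology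

lemma sdt_nonpos {f f' : ℝ → ℝ} {x L : ℝ} (hf : ∀ᶠ y in 𝓝 x, HasDerivAt f (f' y) y)
    (hf' : HasDerivAt f' L x) (hmax : IsLocalMax f x) : L ≤ 0 := by
  by_contra hL
  push Not at hL
  have h0 : f' x = 0 := hmax.hasDerivAt_eq_zero hf.self_of_nhds
  have hd : deriv f =ᶠ[𝓝 x] f' := hf.mono fun y hy => hy.deriv
  have h2 : deriv (deriv f) x = L := by rw [hd.deriv_eq]; exact hf'.deriv
  have hmin : IsLocalMin f x := isLocalMin_of_deriv_deriv_pos (by rw [h2]; exact hL)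
    (by rw [hd.self_of_nhds, h0]) hf.self_of_nhds.continuousAt
  have hc : f =ᶠ[𝓝 x] fun _ => f x := by
    filter_upwards [hmax, hmin] with y h1 h2
    exact le_antisymm h1 h2
  have hd2 : deriv f =ᶠ[𝓝 x] fun _ => 0 := by
    have := hc.deriv
    simpa using this
  rw [hd2.deriv_eq] at h2
  simp at h2
  linarith

lemma left_deriv_nonneg {f : ℝ → ℝ} {t d : ℝ} (hf : HasDerivAt f d t)
    (hmax : ∀ᶠ s in 𝓝[<] t, f s ≤ f t) : 0 ≤ d := by
  have h1 := (hasDerivAt_iff_tendsto_slope_left_right.1 hf).1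
  refine ge_of_tendsto h1 ?_
  filter_upwards [hmax, self_mem_nhdsWithin] with s hs hs2
  rw [slope_def_field]
  apply div_nonneg_of_nonpos <;> [linarith; (have : s < t := hs2; linarith)]

lemma right_deriv_exists {f : ℝ → ℝ} {t d c : ℝ} (hf : HasDerivWithinAt f d (Ici t) t)
    (hd : 0 < d) (hc : t < c) : ∃ s, t < s ∧ s < c ∧ f t < f s := by
  have h1 := (hasDerivWithinAt_iff_tendsto_slope.1 hf)
  have h2 : Ici t \ {t} = Ioi t := by ext; simp [lt_iff_le_and_ne]
  rw [h2] at h1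
  have h3 := h1.eventually (lt_mem_nhds hd)
  have h4 : ∀ᶠ s in 𝓝[>] t, s < c := eventually_nhdsWithin_of_eventually_nhds (gt_mem_nhds hc)
  obtain ⟨s, hs1, hs2, hs3⟩ := (h3.and (h4.and self_mem_nhdsWithin)).exists
  have hs3 : t < s := hs3
  refine ⟨s, hs3, hs2, ?_⟩
  rw [slope_def_field, lt_div_iff₀ (by linarith)] at hs1
  linarith

lemma region_compact (a t0 T : ℝ) {β : ℝ → ℝ} (hβ : Continuous β) :
    IsCompact {p : ℝ × ℝ | a ≤ p.1 ∧ p.1 ≤ β p.2 ∧ t0 ≤ p.2 ∧ p.2 ≤ T} := by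
  obtain ⟨K, hK⟩ := (isCompact_Icc (a := t0) (b := T)).bddAbove_image hβ.continuousOn
  apply IsCompact.of_isClosed_subset (isCompact_Icc.prod isCompact_Icc : IsCompact (Icc a K ×ˢ Icc t0 T))
  · refine (isClosed_le continuous_const continuous_fst).inter
      ((isClosed_le continuous_fst (hβ.comp continuous_snd)).inter
      ((isClosed_le continuous_const continuous_snd).inter
      (isClosed_le continuous_snd continuous_const)))
  · rintro ⟨x, t⟩ ⟨h1, h2, h3, h4⟩
    exact ⟨⟨h1, h2.trans (hK ⟨t, ⟨h3, h4⟩, rfl⟩)⟩, h3, h4⟩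

theorem wmp (a t0 T : ℝ) (β c : ℝ → ℝ) (z : ℝ → ℝ → ℝ)
    (hβ : Continuous β) (hc : ∀ x, a ≤ x → 0 ≤ c x)
    (hz : Continuous (fun p : ℝ × ℝ => z p.1 p.2))
    (init : ∀ x, a ≤ x → x ≤ β t0 → z x t0 ≤ 0)
    (right : ∀ t, t0 < t → t ≤ T → z (β t) t ≤ 0)
    (left : ∀ t, t0 < t → t ≤ T → z a t ≤ 0 ∨
      ∃ d, 0 ≤ d ∧ HasDerivWithinAt (fun y => z y t) d (Ici a) a)
    (int : ∀ t, t0 < t → t ≤ T → ∀ x, a < x → x < β t → ∃ (zx : ℝ → ℝ) (zt zxx : ℝ),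
      (∀ᶠ y in 𝓝 x, HasDerivAt (fun y => z y t) (zx y) y) ∧ HasDerivAt zx zxx x ∧
      HasDerivAt (fun s => z x s) zt t ∧ zt ≤ zxx + c x * zx x) :
    ∀ t, t0 ≤ t → t ≤ T → ∀ x, a ≤ x → x ≤ β t → z x t ≤ 0 := by
  intro t1 ht1 ht1' x1 hx1 hx1'
  by_contra hpos
  push Not at hpos
  set R := {p : ℝ × ℝ | a ≤ p.1 ∧ p.1 ≤ β p.2 ∧ t0 ≤ p.2 ∧ p.2 ≤ T} with hR
  have hRc : IsCompact R := region_compact a t0 T hβ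
  obtain ⟨K, hK⟩ := (isCompact_Icc (a := t0) (b := T)).bddAbove_image hβ.continuousOn
  have hK' : ∀ t, t0 ≤ t → t ≤ T → β t ≤ K := fun t h1 h2 => hK ⟨t, ⟨h1, h2⟩, rfl⟩
  -- epsilon
  have hden : 0 < (K - x1) + (t1 - t0) + 1 := by
    have := hK' t1 ht1 ht1'; linarith
  set e := z x1 t1 / ((K - x1) + (t1 - t0) + 1) / 2 with he
  have hepos : 0 < e := by positivity
  have he2 : e * ((K - x1) + (t1 - t0) + 1) = z x1 t1 / 2 := by
    rw [he]; field_simp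
  let φ : ℝ × ℝ → ℝ := fun p => z p.1 p.2 + e * (p.1 - K - (p.2 - t0))
  have hφc : Continuous φ := by fun_prop
  obtain ⟨⟨x, t⟩, ⟨hax, hxb, h0t, htT⟩, hmax⟩ :=
    hRc.exists_isMaxOn ⟨(x1, t1), hx1, hx1', ht1, ht1'⟩ hφc.continuousOn
  simp only at hax hxb h0t htT
  have hφ1 : 0 < φ (x1, t1) := by
    simp only [φ]; nlinarith
  have hφx : 0 < φ (x, t) := lt_of_lt_of_le hφ1 (hmax ⟨hx1, hx1', ht1, ht1'⟩)
  have hzx : 0 < z x t := by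
    simp only [φ] at hφx
    have := hK' t h0t htT
    nlinarith
  have ht0 : t0 < t := by
    rcases h0t.lt_or_eq with h | h
    · exact h
    · subst h; have := init x hax hxb; linarith
  have hxb' : x < β t := by
    rcases hxb.lt_or_eq with h | h
    · exact h
    · have := right t ht0 htT; rw [← h] at this; linarith
  rcases hax.lt_or_eq with hax' | hax'
  · obtain ⟨zx, zt, zxx, h1, h2, h3, h4⟩ := int t ht0 htT x hax' hxb'
    have hd1 : ∀ᶠ y in 𝓝 x, HasDerivAt (fun y => φ (y, t)) (zx y + e) y := by
      filter_upwards [h1] with y hy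
      have h5 : HasDerivAt (fun y : ℝ => e * (y - K - (t - t0))) (e * 1) y :=
        (((hasDerivAt_id y).sub_const K).sub_const _).const_mul e
      exact (hy.add h5).congr_deriv (by ring)
    have hlm : IsLocalMax (fun y => φ (y, t)) x := by
      filter_upwards [lt_mem_nhds hax', gt_mem_nhds hxb'] with y hy1 hy2
      exact hmax (⟨hy1.le, hy2.le, h0t, htT⟩ : (y, t) ∈ R)
    have hL := sdt_nonpos hd1 (h2.add_const e) hlm
    have hfirst := hlm.hasDerivAt_eq_zero hd1.self_of_nhds
    have htime : HasDerivAt (fun s => φ (x, s)) (zt - e) t := by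
      have h5 : HasDerivAt (fun s : ℝ => e * (x - K - (s - t0))) (e * (-1)) t :=
        (((hasDerivAt_id t).sub_const t0).const_sub (x - K)).const_mul e
      have := h3.add h5
      rw [show zt - e = zt + e * (-1) by ring]
      exact this
    have hev : ∀ᶠ s in 𝓝[<] t, φ (x, s) ≤ φ (x, t) := by
      have e1 : ∀ᶠ s in 𝓝 t, x < β s := hβ.continuousAt.eventually (lt_mem_nhds hxb')
      filter_upwards [eventually_nhdsWithin_of_eventually_nhds e1,
        eventually_nhdsWithin_of_eventually_nhds (lt_mem_nhds ht0), self_mem_nhdsWithin]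
        with s h1 h2 h3
      have h3 : s < t := h3
      exact hmax (⟨hax, h1.le, h2.le, h3.le.trans htT⟩ : (x, s) ∈ R)
    have := left_deriv_nonneg htime hev
    have := hc x hax
    nlinarith
  · subst hax'
    rcases left t ht0 htT with h | ⟨d, hd, hd'⟩
    · linarith
    · have h5 : HasDerivWithinAt (fun y : ℝ => e * (y - K - (t - t0))) (e * 1) (Ici a) a :=
        ((((hasDerivAt_id a).sub_const K).sub_const _).const_mul e).hasDerivWithinAt
      obtain ⟨s, hs1, hs2, hs3⟩ := right_deriv_exists (hd'.add h5) (by linarith) hxb'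
      have := hmax (⟨hs1.le, hs2.le, h0t, htT⟩ : (s, t) ∈ R)
      simp only [φ, mem_ofPred_eq, Pi.add_apply] at this hs3
      linarith


noncomputable def MM (W : ℝ → ℝ → ℝ) (b : ℝ → ℝ) (x t : ℝ) : ℝ :=
  max (b t - x) 0 + ∫ y in x..b t, W y t

structure Semi (σ h : ℝ) (W V : ℝ → ℝ → ℝ) (b : ℝ → ℝ) : Prop where
  Wc : Continuous fun p : ℝ × ℝ => W p.1 p.2
  bc : Continuous b
  bpos : ∀ t, 0 ≤ t → 0 < b t
  Wnn : ∀ x t, 0 ≤ x → 0 ≤ t → 0 ≤ W x t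
  Wz : ∀ x t, 0 ≤ t → b t ≤ x → W x t = 0
  pde : ∀ t, 0 < t → ∀ x, 0 < x → x < b t → ∃ wt wxx,
    HasDerivAt (fun y => W y t) (V x t) x ∧ HasDerivAt (fun y => V y t) wxx x ∧
    HasDerivAt (fun s => W x s) wt t ∧ σ * (wt - wxx - x / 2 * V x t) ≤ 0
  flux : ∀ t, 0 < t → HasDerivWithinAt (fun y => W y t) (V 0 t) (Ici 0) 0 ∧ σ * (-V 0 t - h) ≤ 0
  mass : ∀ t, 0 < t → ∃ d, HasDerivAt (fun s => MM W b 0 s) d t ∧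
    σ * (d - (h - MM W b 0 t / 2)) ≤ 0
  massx : ∀ t, 0 < t → ∀ x, 0 < x → x < b t → ∃ d, HasDerivAt (fun s => MM W b x s) d t ∧
    σ * (d - (-V x t - x / 2 * (1 + W x t) - MM W b x t / 2)) ≤ 0

lemma slice_cont {W : ℝ → ℝ → ℝ} (hW : Continuous fun p : ℝ × ℝ => W p.1 p.2) (t : ℝ) :
    Continuous fun y => W y t :=
  hW.comp (continuous_id.prodMk continuous_const)

lemma slice_cont' {W : ℝ → ℝ → ℝ} (hW : Continuous fun p : ℝ × ℝ => W p.1 p.2) (x : ℝ) :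
    Continuous fun s => W x s :=
  hW.comp (continuous_const.prodMk continuous_id)

lemma param_cont {W : ℝ → ℝ → ℝ} (hW : Continuous fun p : ℝ × ℝ => W p.1 p.2) {f g : ℝ × ℝ → ℝ}
    (hf : Continuous f) (hg : Continuous g) :
    Continuous fun p : ℝ × ℝ => ∫ y in f p..g p, W y p.2 := by
  have h0 : Continuous (Function.uncurry fun (p : ℝ × ℝ) (y : ℝ) => W y p.2) :=
    hW.comp ((continuous_snd).prodMk (continuous_snd.comp continuous_fst))
  have h1 := fun (s : ℝ × ℝ → ℝ) (hs : Continuous s) =>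
    intervalIntegral.continuous_parametric_intervalIntegral_of_continuous
      (μ := MeasureTheory.volume) (a₀ := 0) h0 hs
  have : (fun p : ℝ × ℝ => ∫ y in f p..g p, W y p.2) =
      fun p => (∫ y in (0:ℝ)..g p, W y p.2) - ∫ y in (0:ℝ)..f p, W y p.2 := by
    ext p
    have hc := slice_cont hW p.2
    rw [intervalIntegral.integral_interval_sub_left (hc.intervalIntegrable _ _)
      (hc.intervalIntegrable _ _)]
  rw [this]
  exact (h1 g hg).sub (h1 f hf)

lemma MM_cont {W : ℝ → ℝ → ℝ} {b : ℝ → ℝ} (hW : Continuous fun p : ℝ × ℝ => W p.1 p.2)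
    (hb : Continuous b) : Continuous fun p : ℝ × ℝ => MM W b p.1 p.2 := by
  unfold MM
  exact (by fun_prop : Continuous fun p : ℝ × ℝ => max (b p.2 - p.1) 0).add
    (param_cont hW continuous_fst (hb.comp continuous_snd))

lemma MM_deriv {W : ℝ → ℝ → ℝ} {b : ℝ → ℝ} (hW : Continuous fun p : ℝ × ℝ => W p.1 p.2)
    {x t : ℝ} (hx : x < b t) : HasDerivAt (fun y => MM W b y t) (-1 - W x t) x := by
  have hc := slice_cont hW t
  have h1 : HasDerivAt (fun y => ∫ z in y..b t, W z t) (- W x t) x :=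
    intervalIntegral.integral_hasDerivAt_left (hc.intervalIntegrable _ _)
      (hc.stronglyMeasurableAtFilter _ _) hc.continuousAt
  have h2 : HasDerivAt (fun y => b t - y) (-1) x := (hasDerivAt_id x).const_sub _
  refine ((h2.add h1).congr_of_eventuallyEq ?_).congr_deriv (by ring)
  filter_upwards [gt_mem_nhds hx] with y hy
  simp only [MM, Pi.add_apply]
  rw [max_eq_left (by linarith)]

namespace Semi
variable {σ h : ℝ} {W V : ℝ → ℝ → ℝ} {b : ℝ → ℝ}

lemma MM_eq (S : Semi σ h W V b) {x t K : ℝ} (ht : 0 ≤ t) (hK : b t ≤ K) (_ : x ≤ K) :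
    MM W b x t = max (b t - x) 0 + ∫ y in x..K, W y t := by
  have hc := slice_cont S.Wc t
  have h1 : ∫ y in b t..K, W y t = 0 := by
    rw [intervalIntegral.integral_congr (g := fun _ => 0)]
    · simp
    · intro y hy
      rw [uIcc_of_le hK] at hy
      exact S.Wz y t ht hy.1
  rw [MM, ← intervalIntegral.integral_add_adjacent_intervals (hc.intervalIntegrable x (b t))
    (hc.intervalIntegrable (b t) K), h1, add_zero]

lemma MM_zero (S : Semi σ h W V b) {x t : ℝ} (ht : 0 ≤ t) (hK : b t ≤ x) :
    MM W b x t = 0 := by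
  rw [S.MM_eq ht hK le_rfl]; simp; linarith

lemma MM_nonneg (S : Semi σ h W V b) {x t : ℝ} (hx : 0 ≤ x) (ht : 0 ≤ t) :
    0 ≤ MM W b x t := by
  rcases le_total (b t) x with h1 | h1
  · rw [S.MM_zero ht h1]
  · rw [MM]
    apply add_nonneg (le_max_right _ _)
    exact intervalIntegral.integral_nonneg h1 fun y hy => S.Wnn y t (hx.trans hy.1) ht

lemma MM_pos (S : Semi σ h W V b) {x t : ℝ} (hx : 0 ≤ x) (ht : 0 ≤ t) (h1 : x < b t) :
    0 < MM W b x t := by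
  rw [MM]
  apply add_pos_of_pos_of_nonneg (lt_max_of_lt_left (by linarith))
  exact intervalIntegral.integral_nonneg h1.le fun y hy => S.Wnn y t (hx.trans hy.1) ht

end Semi

section comp
variable {h : ℝ} {W1 V1 W2 V2 : ℝ → ℝ → ℝ} {b1 b2 : ℝ → ℝ}

lemma mass0_le (S1 : Semi 1 h W1 V1 b1) (S2 : Semi (-1) h W2 V2 b2)
    (h0 : MM W1 b1 0 0 ≤ MM W2 b2 0 0) : ∀ t, 0 ≤ t → MM W1 b1 0 t ≤ MM W2 b2 0 t := by
  let f : ℝ → ℝ := fun t => Real.exp (t / 2) * (MM W1 b1 0 t - MM W2 b2 0 t)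
  have c1 : Continuous fun t => MM W1 b1 0 t := slice_cont' (MM_cont S1.Wc S1.bc) 0
  have c2 : Continuous fun t => MM W2 b2 0 t := slice_cont' (MM_cont S2.Wc S2.bc) 0
  have hd : ∀ t, 0 < t → ∃ d ≤ 0, HasDerivAt f d t := by
    intro t ht
    obtain ⟨d1, hd1, e1⟩ := S1.mass t ht
    obtain ⟨d2, hd2, e2⟩ := S2.mass t ht
    have he : HasDerivAt (fun t : ℝ => Real.exp (t / 2)) (Real.exp (t / 2) * (1 / 2)) t :=
      ((hasDerivAt_id t).div_const 2).exp
    refine ⟨_, ?_, he.mul (hd1.sub hd2)⟩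
    have := Real.exp_pos (t / 2)
    nlinarith
  have ha : AntitoneOn f (Ici 0) := by
    apply antitoneOn_of_deriv_nonpos (convex_Ici 0)
    · apply Continuous.continuousOn
      exact (Real.continuous_exp.comp (continuous_id.div_const 2)).mul (c1.sub c2)
    · intro t ht
      rw [interior_Ici] at ht
      obtain ⟨d, _, hd'⟩ := hd t ht
      exact hd'.differentiableAt.differentiableWithinAt
    · intro t ht
      rw [interior_Ici] at ht
      obtain ⟨d, hd0, hd'⟩ := hd t ht
      rw [hd'.deriv]; exact hd0
  intro t ht
  have h1 := ha (mem_Ici.2 le_rfl) (mem_Ici.2 ht) ht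
  simp only [f] at h1
  have h2 : Real.exp (t / 2) * (MM W1 b1 0 t - MM W2 b2 0 t) ≤ 0 := by
    refine h1.trans ?_
    simp; linarith
  have := Real.exp_pos (t / 2)
  by_contra hc
  push Not at hc
  nlinarith

theorem mass_le (S1 : Semi 1 h W1 V1 b1) (S2 : Semi (-1) h W2 V2 b2)
    (hb : b1 0 ≤ b2 0) (hW : ∀ x, 0 ≤ x → W1 x 0 ≤ W2 x 0) :
    ∀ t, 0 ≤ t → ∀ x, 0 ≤ x → MM W1 b1 x t ≤ MM W2 b2 x t := by
  have hinit : ∀ x, 0 ≤ x → MM W1 b1 x 0 ≤ MM W2 b2 x 0 := by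
    intro x hx
    have k1 : b1 0 ≤ max (b2 0) x := hb.trans (le_max_left _ _)
    rw [S1.MM_eq le_rfl k1 (le_max_right _ _), S2.MM_eq le_rfl (le_max_left (b2 0) x)
      (le_max_right _ _)]
    apply add_le_add
    · exact max_le_max (by linarith) le_rfl
    · exact intervalIntegral.integral_mono_on (le_max_right _ _)
        ((slice_cont S1.Wc 0).intervalIntegrable _ _)
        ((slice_cont S2.Wc 0).intervalIntegrable _ _) fun y hy => hW y (hx.trans hy.1)
  have hm0 := mass0_le S1 S2 (hinit 0 le_rfl)
  intro T hT x1 hx1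
  by_contra hpos
  push Not at hpos
  have hx1b : x1 ≤ b1 T := by
    by_contra hcon
    push Not at hcon
    rw [S1.MM_zero hT hcon.le] at hpos
    have := S2.MM_nonneg hx1 hT
    linarith
  set R := {p : ℝ × ℝ | 0 ≤ p.1 ∧ p.1 ≤ b1 p.2 ∧ 0 ≤ p.2 ∧ p.2 ≤ T} with hR
  have hRc : IsCompact R := region_compact 0 0 T S1.bc
  obtain ⟨K, hK⟩ := (isCompact_Icc (a := 0) (b := T)).bddAbove_image S1.bc.continuousOn
  have hK' : ∀ t, 0 ≤ t → t ≤ T → b1 t ≤ K := fun t h1 h2 => hK ⟨t, ⟨h1, h2⟩, rfl⟩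
  have hK0 : 0 < K := (S1.bpos 0 le_rfl).trans_le (hK' 0 le_rfl hT)
  set D := MM W1 b1 x1 T - MM W2 b2 x1 T with hD
  have hDpos : 0 < D := by linarith
  set e := D / (x1 + K * T + 1) / 2 with he
  have hepos : 0 < e := by positivity
  have he2 : e * (x1 + K * T + 1) = D / 2 := by
    rw [he]; field_simp
  let φ : ℝ × ℝ → ℝ := fun p => MM W1 b1 p.1 p.2 - MM W2 b2 p.1 p.2 - e * (p.1 + K * p.2)
  have hφc : Continuous φ :=
    ((MM_cont S1.Wc S1.bc).sub (MM_cont S2.Wc S2.bc)).sub (by fun_prop)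
  obtain ⟨⟨x, t⟩, ⟨hax, hxb, h0t, htT⟩, hmax⟩ :=
    hRc.exists_isMaxOn ⟨(x1, T), hx1, hx1b, hT, le_rfl⟩ hφc.continuousOn
  simp only at hax hxb h0t htT
  have hφ1 : 0 < φ (x1, T) := by
    simp only [φ]; nlinarith
  have hφx : 0 < φ (x, t) := lt_of_lt_of_le hφ1 (hmax ⟨hx1, hx1b, hT, le_rfl⟩)
  have hwx : MM W2 b2 x t < MM W1 b1 x t := by
    simp only [φ] at hφx
    have : 0 ≤ e * (x + K * t) := by positivity
    linarith
  have ht0 : 0 < t := by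
    rcases h0t.lt_or_eq with h | h
    · exact h
    · subst h; have := hinit x hax; linarith
  have hx0 : 0 < x := by
    rcases hax.lt_or_eq with h | h
    · exact h
    · subst h; have := hm0 t h0t; linarith
  have hxb1 : x < b1 t := by
    rcases hxb.lt_or_eq with h | h
    · exact h
    · rw [S1.MM_zero h0t h.ge] at hwx
      have := S2.MM_nonneg hax h0t
      linarith
  have hd1 := fun y (hy : y < b1 t) => MM_deriv S1.Wc hy
  have hdl : ∀ y, HasDerivAt (fun y : ℝ => e * (y + K * t)) e y := fun y =>
    ((((hasDerivAt_id y).add_const (K * t)).const_mul e)).congr_deriv (by ring)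
  rcases lt_or_ge x (b2 t) with hxb2 | hxb2
  · obtain ⟨_, w1, p1, p1', _, _⟩ := S1.pde t ht0 x hx0 hxb1
    obtain ⟨_, w2, p2, p2', _, _⟩ := S2.pde t ht0 x hx0 hxb2
    obtain ⟨d1, m1, m1'⟩ := S1.massx t ht0 x hx0 hxb1
    obtain ⟨d2, m2, m2'⟩ := S2.massx t ht0 x hx0 hxb2
    have hda : ∀ᶠ y in 𝓝 x, HasDerivAt (fun y => φ (y, t)) ((-1 - W1 y t) - (-1 - W2 y t) - e) y := by
      filter_upwards [gt_mem_nhds hxb1, gt_mem_nhds hxb2] with y hy1 hy2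
      exact ((hd1 y hy1).sub (MM_deriv S2.Wc hy2)).sub (hdl y)
    have hdb : HasDerivAt (fun y => (-1 - W1 y t) - (-1 - W2 y t) - e) ((-V1 x t) - (-V2 x t)) x :=
      ((p1.const_sub (-1)).sub (p2.const_sub (-1))).sub_const e
    have hlm : IsLocalMax (fun y => φ (y, t)) x := by
      filter_upwards [lt_mem_nhds hx0, gt_mem_nhds hxb1] with y hy1 hy2
      exact hmax (⟨hy1.le, hy2.le, h0t, htT⟩ : (y, t) ∈ R)
    have hL := sdt_nonpos hda hdb hlm
    have hfirst := hlm.hasDerivAt_eq_zero hda.self_of_nhds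
    have htime : HasDerivAt (fun s => φ (x, s)) (d1 - d2 - e * K) t := by
      have h5 : HasDerivAt (fun s : ℝ => e * (x + K * s)) (e * K) t :=
        ((((hasDerivAt_id t).const_mul K).const_add x).const_mul e).congr_deriv (by ring)
      exact (m1.sub m2).sub h5
    have hev : ∀ᶠ s in 𝓝[<] t, φ (x, s) ≤ φ (x, t) := by
      have e1 : ∀ᶠ s in 𝓝 t, x < b1 s := S1.bc.continuousAt.eventually (lt_mem_nhds hxb1)
      filter_upwards [eventually_nhdsWithin_of_eventually_nhds e1,
        eventually_nhdsWithin_of_eventually_nhds (lt_mem_nhds ht0), self_mem_nhdsWithin]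
        with s h1 h2 h3
      have h3 : s < t := h3
      exact hmax (⟨hax, h1.le, h2.le, h3.le.trans htT⟩ : (x, s) ∈ R)
    have hl := left_deriv_nonneg htime hev
    have hxK : x < K := hxb1.trans_le (hK' t h0t htT)
    have hWW : W2 x t - W1 x t = e := by linarith
    have : d1 - d2 ≤ x / 2 * e := by
      rw [← hWW]; nlinarith
    nlinarith
  · -- b2 t ≤ x < b1 t : move left
    have hW2c := slice_cont S2.Wc t
    have e1 : ∀ᶠ y in 𝓝 x, W2 y t < e / 2 := by
      have hlt : W2 x t < e / 2 := by rw [S2.Wz x t h0t hxb2]; positivity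
      exact hW2c.continuousAt.eventually (gt_mem_nhds hlt)
    obtain ⟨δ, hδ, hball⟩ := Metric.eventually_nhds_iff.1 e1
    set y := max (x / 2) (x - δ / 2) with hy
    have hyx : y < x := max_lt (by linarith) (by linarith)
    have hy0 : 0 < y := lt_max_of_lt_left (by linarith)
    have hyδ : x - δ / 2 ≤ y := le_max_right _ _
    have hm := hmax (⟨hy0.le, (hyx.trans hxb1).le, h0t, htT⟩ : (y, t) ∈ R)
    simp only [φ, mem_ofPred_eq] at hm
    have i1 : MM W1 b1 y t - MM W1 b1 x t ≥ x - y := by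
      rw [MM, MM, max_eq_left (by linarith), max_eq_left (by linarith)]
      have hc := slice_cont S1.Wc t
      rw [← intervalIntegral.integral_add_adjacent_intervals (hc.intervalIntegrable y x)
        (hc.intervalIntegrable x (b1 t))]
      have : 0 ≤ ∫ z in y..x, W1 z t :=
        intervalIntegral.integral_nonneg hyx.le fun z hz => S1.Wnn z t (hy0.le.trans hz.1) h0t
      linarith
    have i2 : MM W2 b2 y t - MM W2 b2 x t ≤ (x - y) * (1 + e / 2) := by
      rw [S2.MM_zero h0t hxb2, S2.MM_eq h0t hxb2 hyx.le]
      have j1 : max (b2 t - y) 0 ≤ x - y := max_le (by linarith) (by linarith)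
      have j2 : ∫ z in y..x, W2 z t ≤ ∫ z in y..x, e / 2 := by
        apply intervalIntegral.integral_mono_on hyx.le (hW2c.intervalIntegrable _ _)
          (continuous_const.intervalIntegrable _ _)
        intro z hz
        apply (hball _).le
        rw [Real.dist_eq, abs_lt]
        constructor <;> linarith [hz.1, hz.2]
      rw [intervalIntegral.integral_const, smul_eq_mul] at j2
      linarith
    nlinarith

theorem comparison (S1 : Semi 1 h W1 V1 b1) (S2 : Semi (-1) h W2 V2 b2)
    (hb : b1 0 ≤ b2 0) (hW : ∀ x, 0 ≤ x → W1 x 0 ≤ W2 x 0) :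
    (∀ t, 0 ≤ t → b1 t ≤ b2 t) ∧ ∀ t, 0 ≤ t → ∀ x, 0 ≤ x → W1 x t ≤ W2 x t := by
  have hM := mass_le S1 S2 hb hW
  have hbb : ∀ t, 0 ≤ t → b1 t ≤ b2 t := by
    intro t ht
    by_contra hcon
    push Not at hcon
    have h2 := (S2.bpos t ht).le
    have := hM t ht (b2 t) h2
    rw [S2.MM_zero ht le_rfl] at this
    have := S1.MM_pos h2 ht hcon
    linarith
  refine ⟨hbb, fun t ht x hx => ?_⟩
  rcases le_total (b1 t) x with hx1 | hx1
  · rw [S1.Wz x t ht hx1]; exact S2.Wnn x t hx ht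
  have := wmp 0 0 t b1 (fun x => x / 2) (fun x t => W1 x t - W2 x t) S1.bc
    (fun x hx => by positivity) (S1.Wc.sub S2.Wc)
    (fun x hx _ => by have := hW x hx; linarith)
    (fun s hs _ => by
      have := S1.Wz (b1 s) s hs.le le_rfl
      have := S2.Wnn (b1 s) s (S1.bpos s hs.le).le hs.le
      linarith)
    (fun s hs _ => by
      right
      obtain ⟨a1, a2⟩ := S1.flux s hs
      obtain ⟨c1, c2⟩ := S2.flux s hs
      exact ⟨V1 0 s - V2 0 s, by linarith, a1.sub c1⟩)
    (fun s hs _ x hx hxb => by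
      have hxb2 := hxb.trans_le (hbb s hs.le)
      obtain ⟨t1, w1, p1, p2, p3, p4⟩ := S1.pde s hs x hx hxb
      obtain ⟨t2, w2, q1, q2, q3, q4⟩ := S2.pde s hs x hx hxb2
      refine ⟨fun y => V1 y s - V2 y s, t1 - t2, w1 - w2, ?_, p2.sub q2, p3.sub q3, ?_⟩
      · filter_upwards [lt_mem_nhds hx, gt_mem_nhds hxb] with y hy1 hy2
        obtain ⟨_, _, p1, _⟩ := S1.pde s hs y hy1 hy2
        obtain ⟨_, _, q1, _⟩ := S2.pde s hs y hy1 (hy2.trans_le (hbb s hs.le))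
        exact p1.sub q1
      · nlinarith)
    t ht le_rfl x hx hx1
  linarith

end comp


lemma diff_under {W V : ℝ → ℝ → ℝ} (hW : Continuous fun p : ℝ × ℝ => W p.1 p.2)
    (hV : Continuous fun p : ℝ × ℝ => V p.1 p.2) {t0 t1 a c x : ℝ} (ht : t0 ≤ t1)
    (hax : a < x) (hxc : x < c)
    (hd : ∀ s, t0 < s → s ≤ t1 → ∀ y, a < y → y < c → HasDerivAt (fun y => W y s) (V y s) y) :
    HasDerivAt (fun y => ∫ s in t0..t1, W y s) (∫ s in t0..t1, V x s) x := by
  have hcpt : IsCompact (Icc a c ×ˢ Icc t0 t1) := isCompact_Icc.prod isCompact_Icc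
  obtain ⟨B, hB⟩ := hcpt.exists_bound_of_continuousOn hV.continuousOn
  refine (intervalIntegral.hasDerivAt_integral_of_dominated_loc_of_deriv_le
    (s := Ioo a c) (bound := fun _ => B) (Ioo_mem_nhds hax hxc) ?_ ?_ ?_ ?_ ?_ ?_).2
  · exact Eventually.of_forall fun y => (slice_cont' hW y).aestronglyMeasurable
  · exact (slice_cont' hW x).intervalIntegrable _ _
  · exact (slice_cont' hV x).aestronglyMeasurable
  · refine Eventually.of_forall fun s hs y hy => ?_
    rw [uIoc_of_le ht] at hs
    exact hB (y, s) ⟨⟨hy.1.le, hy.2.le⟩, hs.1.le, hs.2⟩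
  · exact continuous_const.intervalIntegrable _ _
  · refine Eventually.of_forall fun s hs y hy => ?_
    rw [uIoc_of_le ht] at hs
    exact hd s hs.1 hs.2 y hy.1 hy.2

def Solv (c t0 : ℝ) (f : ℝ → ℝ → ℝ) (z : ℝ → ℝ) : Prop :=
  ∃ v vx vxx vt : ℝ → ℝ → ℝ,
    (Continuous fun p : ℝ × ℝ => v p.1 p.2) ∧ (Continuous fun p : ℝ × ℝ => vx p.1 p.2) ∧
    (Continuous fun p : ℝ × ℝ => vxx p.1 p.2) ∧ (Continuous fun p : ℝ × ℝ => vt p.1 p.2) ∧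
    (∀ x t, HasDerivAt (fun y => v y t) (vx x t) x) ∧
    (∀ x t, HasDerivAt (fun y => vx y t) (vxx x t) x) ∧
    (∀ x t, HasDerivAt (fun s => v x s) (vt x t) t) ∧
    (∀ t, v 0 t = 0) ∧ (∀ t, v c t = 0) ∧ (∀ x t, vt x t - vxx x t = f x t) ∧ ∀ x, v x t0 = z x

lemma Solv.add {c t0 : ℝ} {f g : ℝ → ℝ → ℝ} {z w : ℝ → ℝ} (h1 : Solv c t0 f z)
    (h2 : Solv c t0 g w) : Solv c t0 (fun x t => f x t + g x t) (fun x => z x + w x) := by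
  obtain ⟨v, vx, vxx, vt, a1, a2, a3, a4, a5, a6, a7, a8, a9, a10, a11⟩ := h1
  obtain ⟨u, ux, uxx, ut, b1, b2, b3, b4, b5, b6, b7, b8, b9, b10, b11⟩ := h2
  refine ⟨fun x t => v x t + u x t, fun x t => vx x t + ux x t, fun x t => vxx x t + uxx x t,
    fun x t => vt x t + ut x t, a1.add b1, a2.add b2, a3.add b3, a4.add b4,
    fun x t => (a5 x t).add (b5 x t), fun x t => (a6 x t).add (b6 x t),
    fun x t => (a7 x t).add (b7 x t), fun t => by simp [a8, b8], fun t => by simp [a9, b9],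
    fun x t => by simp only [← a10, ← b10]; ring, fun x => by simp only [a11, b11]⟩

lemma Solv.smul {c t0 : ℝ} {f : ℝ → ℝ → ℝ} {z : ℝ → ℝ} (r : ℝ) (h1 : Solv c t0 f z) :
    Solv c t0 (fun x t => r * f x t) (fun x => r * z x) := by
  obtain ⟨v, vx, vxx, vt, a1, a2, a3, a4, a5, a6, a7, a8, a9, a10, a11⟩ := h1
  refine ⟨fun x t => r * v x t, fun x t => r * vx x t, fun x t => r * vxx x t,
    fun x t => r * vt x t, a1.const_mul r, a2.const_mul r, a3.const_mul r, a4.const_mul r,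
    fun x t => (a5 x t).const_mul r, fun x t => (a6 x t).const_mul r,
    fun x t => (a7 x t).const_mul r, fun t => by simp [a8], fun t => by simp [a9],
    fun x t => by simp only [← a10]; ring, fun x => by simp only [a11]⟩

def Solv1 (c t0 : ℝ) (p : ℝ → ℝ) : Prop :=
  ∀ a : ℝ → ℝ, Continuous a → ∀ r : ℝ, Solv c t0 (fun x t => p x * a t) (fun x => p x * r)

lemma solv1_sin {c t0 k : ℝ} (hk : k * c = Real.pi) (n : ℤ) :
    Solv1 c t0 (fun x => Real.sin (n * (k * x))) := by
  intro a ha r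
  set μ : ℝ := (n * k) ^ 2 with hμ
  let β : ℝ → ℝ := fun t =>
    Real.exp (-(μ * (t - t0))) * (r + ∫ s in t0..t, Real.exp (μ * (s - t0)) * a s)
  have hc : Continuous fun s => Real.exp (μ * (s - t0)) * a s := by fun_prop
  have hβ : ∀ t, HasDerivAt β (-μ * β t + a t) t := by
    intro t
    have h1 : HasDerivAt (fun t => ∫ s in t0..t, Real.exp (μ * (s - t0)) * a s)
        (Real.exp (μ * (t - t0)) * a t) t := hc.integral_hasStrictDerivAt t0 t |>.hasDerivAt
    have h2 : HasDerivAt (fun t => Real.exp (-(μ * (t - t0)))) (Real.exp (-(μ * (t - t0))) * -(μ * 1)) t :=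
      ((((hasDerivAt_id t).sub_const t0).const_mul μ).neg).exp
    refine (h2.mul (h1.const_add r)).congr_deriv ?_
    have h3 : Real.exp (-(μ * (t - t0))) * Real.exp (μ * (t - t0)) = 1 := by
      rw [← Real.exp_add]; simp
    simp only [β]
    linear_combination (a t) * h3
  have hβc : Continuous β := continuous_iff_continuousAt.2 fun t => (hβ t).continuousAt
  have hs : ∀ x : ℝ, HasDerivAt (fun x : ℝ => Real.sin (n * (k * x))) (n * k * Real.cos (n * (k * x))) x := by
    intro x
    have : HasDerivAt (fun x : ℝ => (n : ℝ) * (k * x)) (n * (k * 1)) x :=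
      ((hasDerivAt_id x).const_mul k).const_mul _
    exact this.sin.congr_deriv (by ring)
  have hcs : ∀ x : ℝ, HasDerivAt (fun x : ℝ => n * k * Real.cos (n * (k * x))) (-μ * Real.sin (n * (k * x))) x := by
    intro x
    have : HasDerivAt (fun x : ℝ => (n : ℝ) * (k * x)) (n * (k * 1)) x :=
      ((hasDerivAt_id x).const_mul k).const_mul _
    exact (this.cos.const_mul (n * k : ℝ)).congr_deriv (by rw [hμ]; ring)
  refine ⟨fun x t => Real.sin (n * (k * x)) * β t, fun x t => n * k * Real.cos (n * (k * x)) * β t,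
    fun x t => -μ * Real.sin (n * (k * x)) * β t,
    fun x t => Real.sin (n * (k * x)) * (-μ * β t + a t), by fun_prop, by fun_prop, by fun_prop,
    by fun_prop, fun x t => (hs x).mul_const _, fun x t => (hcs x).mul_const _,
    fun x t => (hβ t).const_mul _, fun t => by simp, fun t => by simp [hk, Real.sin_int_mul_pi],
    fun x t => by ring, fun x => by simp [β]⟩

lemma solv1_sincos {c t0 k : ℝ} (hk : k * c = Real.pi) (i : ℕ) : ∀ n : ℤ,
    Solv1 c t0 (fun x => Real.sin (n * (k * x)) * Real.cos (k * x) ^ i) := by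
  induction i with
  | zero => intro n; simpa using solv1_sin hk n
  | succ i ih =>
    intro n a ha r
    have h1 := ((ih (n + 1) a ha r).add (ih (n - 1) a ha r)).smul (1 / 2)
    have key : ∀ x, Real.sin (n * (k * x)) * Real.cos (k * x) ^ (i + 1) =
        1 / 2 * (Real.sin ((n + 1 : ℤ) * (k * x)) * Real.cos (k * x) ^ i
          + Real.sin ((n - 1 : ℤ) * (k * x)) * Real.cos (k * x) ^ i) := by
      intro x
      have e1 : ((n + 1 : ℤ) : ℝ) * (k * x) = n * (k * x) + k * x := by push_cast; ring
      have e2 : ((n - 1 : ℤ) : ℝ) * (k * x) = n * (k * x) - k * x := by push_cast; ring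
      rw [e1, e2, Real.sin_add, Real.sin_sub]
      ring
    convert h1 using 1
    · ext x t; beta_reduce; rw [key]; ring
    · ext x; beta_reduce; rw [key]; ring

def GoodP (c t0 k : ℝ) (p : ℝ → ℝ → ℝ) : Prop :=
  Solv c t0 (fun x t => Real.sin (k * x) * p x t) (fun _ => 0) ∧
  Solv c t0 (fun _ _ => 0) (fun x => Real.sin (k * x) * p x t0)

lemma approxP {c t0 t1 k : ℝ} (hc : 0 < c) (hk : k * c = Real.pi)
    {g : ℝ → ℝ → ℝ} (hg : Continuous fun p : ℝ × ℝ => g p.1 p.2) {ε : ℝ} (hε : 0 < ε) :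
    ∃ p, GoodP c t0 k p ∧ ∀ x t, 0 ≤ x → x ≤ c → t0 ≤ t → t ≤ t1 → |p x t - g x t| ≤ ε := by
  have hkpos : 0 < k := by
    have := Real.pi_pos; rw [← hk] at this; exact pos_of_mul_pos_left this hc.le
  let X : Set (ℝ × ℝ) := Icc 0 c ×ˢ Icc t0 t1
  have : CompactSpace X := isCompact_iff_compactSpace.1 (isCompact_Icc.prod isCompact_Icc)
  let C1 : C(X, ℝ) := ⟨fun y => Real.cos (k * y.1.1), by fun_prop⟩
  let T1 : C(X, ℝ) := ⟨fun y => y.1.2, by fun_prop⟩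
  let G : C(X, ℝ) := ⟨fun y => g y.1.1 y.1.2, hg.comp continuous_subtype_val⟩
  let A : Subalgebra ℝ C(X, ℝ) := Algebra.adjoin ℝ {C1, T1}
  have hsep : A.SeparatesPoints := by
    rintro ⟨⟨x, t⟩, hx, ht⟩ ⟨⟨y, s⟩, hy, hs⟩ hne
    by_cases hxy : x = y
    · refine ⟨T1, ⟨T1, Algebra.subset_adjoin (by simp), rfl⟩, ?_⟩
      intro hts
      apply hne
      have : t = s := hts
      subst hxy; subst this; rfl
    · refine ⟨C1, ⟨C1, Algebra.subset_adjoin (by simp), rfl⟩, ?_⟩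
      intro hts
      apply hxy
      have h1 : Real.cos (k * x) = Real.cos (k * y) := hts
      have h2 := Real.injOn_cos (x₁ := k * x) ⟨mul_nonneg hkpos.le hx.1, by
        rw [← hk]; exact mul_le_mul_of_nonneg_left hx.2 hkpos.le⟩ (x₂ := k * y) ⟨mul_nonneg hkpos.le hy.1, by
        rw [← hk]; exact mul_le_mul_of_nonneg_left hy.2 hkpos.le⟩ h1
      exact mul_left_cancel₀ hkpos.ne' h2
  have hA : ∀ q ∈ A, ∃ p, GoodP c t0 k p ∧ ∀ y : X, q y = p y.1.1 y.1.2 := by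
    intro q hq
    rw [← Subalgebra.mem_toSubmodule, Algebra.adjoin_eq_span] at hq
    induction hq using Submodule.span_induction with
    | mem q hq =>
      obtain ⟨i, j, rfl⟩ := (Submonoid.mem_closure_pair _ _ _).1 hq
      refine ⟨fun x t => Real.cos (k * x) ^ i * t ^ j, ⟨?_, ?_⟩, fun y => by simp [C1, T1]⟩
      · have := solv1_sincos (t0 := t0) hk i 1 (fun t => t ^ j) (by fun_prop) 0
        simpa [mul_assoc] using this
      · have := solv1_sincos (t0 := t0) hk i 1 (fun t => 0) (by fun_prop) (t0 ^ j)
        simpa [mul_assoc] using this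
    | zero =>
      refine ⟨fun _ _ => 0, ?_, fun y => rfl⟩
      have := (solv1_sincos (t0 := t0) hk 0 1 (fun t => 0) (by fun_prop) 0)
      constructor <;> simpa using this
    | add q1 q2 _ _ h1 h2 =>
      obtain ⟨p1, ⟨g1, g1'⟩, e1⟩ := h1
      obtain ⟨p2, ⟨g2, g2'⟩, e2⟩ := h2
      refine ⟨fun x t => p1 x t + p2 x t, ⟨?_, ?_⟩, fun y => by simp [e1, e2]⟩
      · simpa [mul_add] using g1.add g2
      · simpa [mul_add] using g1'.add g2'
    | smul r q1 _ h1 =>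
      obtain ⟨p1, ⟨g1, g1'⟩, e1⟩ := h1
      refine ⟨fun x t => r * p1 x t, ⟨?_, ?_⟩, fun y => by simp [e1]⟩
      · simpa [mul_left_comm] using g1.smul r
      · simpa [mul_left_comm] using g1'.smul r
  obtain ⟨⟨q, hqA⟩, hq⟩ := ContinuousMap.exists_mem_subalgebra_near_continuousMap_of_separatesPoints
    A hsep G ε hε
  obtain ⟨p, hp, he⟩ := hA q hqA
  refine ⟨p, hp, fun x t h1 h2 h3 h4 => ?_⟩
  have h5 := (ContinuousMap.norm_coe_le_norm (q - G) ⟨(x, t), ⟨h1, h2⟩, h3, h4⟩).trans hq.le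
  simpa [he, G] using h5


lemma small_bvp {e e' e'' : ℝ → ℝ} {c M : ℝ} (hc : 0 < c) (h1 : ∀ x, HasDerivAt e (e' x) x)
    (h2 : ∀ x, HasDerivAt e' (e'' x) x) (h0 : e 0 = 0) (h3 : e c = 0)
    (hM : ∀ x, 0 ≤ x → x ≤ c → |e'' x| ≤ M) : ∀ x, 0 ≤ x → x ≤ c → |e x| ≤ M * c * c := by
  have hM0 : 0 ≤ M := (abs_nonneg _).trans (hM 0 le_rfl hc.le)
  obtain ⟨ξ, hξ, hξ0⟩ := exists_hasDerivAt_eq_zero hc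
    (fun x _ => (h1 x).continuousAt.continuousWithinAt) (by rw [h0, h3]) (fun x _ => h1 x)
  have hb : ∀ y, 0 ≤ y → y ≤ c → |e' y| ≤ M * c := by
    intro y hy hyc
    have := (convex_Icc (0:ℝ) c).norm_image_sub_le_of_norm_hasDerivWithin_le (f := e') (f' := e'')
      (C := M) (x := ξ) (y := y) (fun x _ => (h2 x).hasDerivWithinAt) (fun x hx => hM x hx.1 hx.2)
      ⟨hξ.1.le, hξ.2.le⟩ ⟨hy, hyc⟩
    rw [hξ0, sub_zero] at this
    refine (this : |e' y| ≤ _).trans (mul_le_mul_of_nonneg_left ?_ hM0)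
    rw [Real.norm_eq_abs, abs_le]; constructor <;> linarith [hξ.1, hξ.2]
  intro x hx hxc
  have := (convex_Icc (0:ℝ) c).norm_image_sub_le_of_norm_hasDerivWithin_le (f := e) (f' := e')
      (C := M * c) (x := 0) (y := x) (fun x _ => (h1 x).hasDerivWithinAt)
      (fun x hx => hb x hx.1 hx.2) ⟨le_rfl, hc.le⟩ ⟨hx, hxc⟩
  rw [h0, sub_zero, sub_zero] at this
  refine (this : |e x| ≤ _).trans (mul_le_mul_of_nonneg_left ?_ (mul_nonneg hM0 hc.le))
  rw [Real.norm_eq_abs, abs_le]; constructor <;> linarith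

lemma int_close {f g : ℝ → ℝ} {a b C : ℝ} (hab : a ≤ b) (hf : Continuous f) (hg : Continuous g)
    (h : ∀ s, a ≤ s → s ≤ b → |f s - g s| ≤ C) :
    |(∫ s in a..b, f s) - ∫ s in a..b, g s| ≤ C * (b - a) := by
  rw [← intervalIntegral.integral_sub (hf.intervalIntegrable _ _) (hg.intervalIntegrable _ _)]
  have := intervalIntegral.norm_integral_le_of_norm_le_const (a := a) (b := b)
    (f := fun s => f s - g s) (C := C) (by
      intro s hs; rw [uIoc_of_le hab] at hs; exact h s hs.1.le hs.2)
  rwa [abs_of_nonneg (by linarith : 0 ≤ b - a)] at this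

lemma heat_approx {c t0 t1 k : ℝ} (hc : 0 < c) (hk : k * c = Real.pi) (ht : t0 < t1)
    {q g : ℝ → ℝ → ℝ} (hq : Continuous fun p : ℝ × ℝ => q p.1 p.2)
    (hZ : ∀ t, t0 < t → t ≤ t1 → ∀ x, 0 < x → x < c → ∃ (zx : ℝ → ℝ) (zxx zt : ℝ),
      (∀ᶠ y in 𝓝 x, HasDerivAt (fun y => Real.sin (k * y) * q y t) (zx y) y) ∧
      HasDerivAt zx zxx x ∧ HasDerivAt (fun s => Real.sin (k * x) * q x s) zt t ∧
      zt - zxx = Real.sin (k * x) * g x t)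
    {ε : ℝ} (hε : 0 < ε) {v vx vxx vt f : ℝ → ℝ → ℝ}
    (a1 : Continuous fun p : ℝ × ℝ => v p.1 p.2)
    (a5 : ∀ x t, HasDerivAt (fun y => v y t) (vx x t) x)
    (a6 : ∀ x t, HasDerivAt (fun y => vx y t) (vxx x t) x)
    (a7 : ∀ x t, HasDerivAt (fun s => v x s) (vt x t) t)
    (a8 : ∀ t, v 0 t = 0) (a9 : ∀ t, v c t = 0) (a10 : ∀ x t, vt x t - vxx x t = f x t)
    (hf : ∀ x t, 0 ≤ x → x ≤ c → t0 ≤ t → t ≤ t1 → |f x t - Real.sin (k * x) * g x t| ≤ ε)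
    (hi : ∀ x, 0 ≤ x → x ≤ c → |v x t0 - Real.sin (k * x) * q x t0| ≤ ε)
    (σ : ℝ) (hσ : |σ| = 1) : ∀ t, t0 ≤ t → t ≤ t1 → ∀ x, 0 ≤ x → x ≤ c →
      σ * (Real.sin (k * x) * q x t - v x t) ≤ ε * (1 + (t - t0)) := by
  have key := wmp 0 t0 t1 (fun _ => c) (fun _ => 0)
    (fun x t => σ * (Real.sin (k * x) * q x t - v x t) - ε * (1 + (t - t0))) continuous_const
    (fun _ _ => le_rfl) (by fun_prop) ?_ ?_ ?_ ?_
  · intro t h1 h2 x h3 h4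
    have := key t h1 h2 x h3 h4
    linarith
  · intro x h1 h2
    have h3 := hi x h1 h2
    have : σ * (Real.sin (k * x) * q x t0 - v x t0) ≤ ε := by
      refine (le_abs_self _).trans ?_
      rw [abs_mul, hσ, one_mul, abs_sub_comm]; exact h3
    simp only [sub_self]; linarith
  · intro t h1 h2
    simp only [a9, hk, Real.sin_pi]
    nlinarith [mul_nonneg hε.le (sub_pos.2 h1).le]
  · intro t h1 h2
    left
    simp only [a8, mul_zero, Real.sin_zero]
    nlinarith [mul_nonneg hε.le (sub_pos.2 h1).le]
  · intro t h1 h2 x h3 h4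
    obtain ⟨zx, zxx, zt, e1, e2, e3, e4⟩ := hZ t h1 h2 x h3 h4
    refine ⟨fun y => σ * (zx y - vx y t), σ * (zt - vt x t) - ε * 1, σ * (zxx - vxx x t), ?_, ?_, ?_, ?_⟩
    · filter_upwards [e1] with y hy
      exact ((hy.sub (a5 y t)).const_mul σ).sub_const _
    · exact (e2.sub (a6 x t)).const_mul σ
    · exact ((e3.sub (a7 x t)).const_mul σ).sub
        ((((hasDerivAt_id t).sub_const t0).const_add 1).const_mul ε)
    · have h5 := hf x t h3.le h4.le h1.le h2
      rw [← a10, ← e4] at h5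
      have : σ * ((zt - zxx) - (vt x t - vxx x t)) ≤ ε := by
        refine (le_abs_self _).trans ?_
        rw [abs_mul, hσ, one_mul, abs_sub_comm]; exact h5
      linarith

lemma heat_rep {c t0 t1 k : ℝ} (hc : 0 < c) (hk : k * c = Real.pi) (ht : t0 < t1)
    {q g : ℝ → ℝ → ℝ} (hq : Continuous fun p : ℝ × ℝ => q p.1 p.2)
    (hg : Continuous fun p : ℝ × ℝ => g p.1 p.2)
    (hZ : ∀ t, t0 < t → t ≤ t1 → ∀ x, 0 < x → x < c → ∃ (zx : ℝ → ℝ) (zxx zt : ℝ),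
      (∀ᶠ y in 𝓝 x, HasDerivAt (fun y => Real.sin (k * y) * q y t) (zx y) y) ∧
      HasDerivAt zx zxx x ∧ HasDerivAt (fun s => Real.sin (k * x) * q x s) zt t ∧
      zt - zxx = Real.sin (k * x) * g x t) :
    ∃ K K' : ℝ → ℝ, (∀ x, HasDerivAt K (K' x) x) ∧
      (∀ x, HasDerivAt K' (Real.sin (k * x) * q x t1 - Real.sin (k * x) * q x t0
        - ∫ s in t0..t1, Real.sin (k * x) * g x s) x) ∧
      ∀ x, 0 ≤ x → x ≤ c → ∫ s in t0..t1, Real.sin (k * x) * q x s = K x := by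
  set D : ℝ → ℝ := fun x => Real.sin (k * x) * q x t1 - Real.sin (k * x) * q x t0
        - ∫ s in t0..t1, Real.sin (k * x) * g x s with hD
  have hgs : Continuous fun p : ℝ × ℝ => Real.sin (k * p.1) * g p.1 p.2 := by fun_prop
  have hqs : Continuous fun p : ℝ × ℝ => Real.sin (k * p.1) * q p.1 p.2 := by fun_prop
  have hDc : Continuous D := by
    have h1 := slice_cont (W := fun x t => Real.sin (k * x) * q x t) hqs t1
    have h2 := slice_cont (W := fun x t => Real.sin (k * x) * q x t) hqs t0
    have h3 : Continuous fun x => ∫ s in t0..t1, Real.sin (k * x) * g x s :=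
      intervalIntegral.continuous_parametric_intervalIntegral_of_continuous' hgs t0 t1
    exact (h1.sub h2).sub h3
  let D1 : ℝ → ℝ := fun x => ∫ y in (0:ℝ)..x, D y
  have hD1 : ∀ x, HasDerivAt D1 (D x) x := fun x => (hDc.integral_hasStrictDerivAt 0 x).hasDerivAt
  have hD1c : Continuous D1 := continuous_iff_continuousAt.2 fun t => (hD1 t).continuousAt
  let D2 : ℝ → ℝ := fun x => ∫ y in (0:ℝ)..x, D1 y
  have hD2 : ∀ x, HasDerivAt D2 (D1 x) x := fun x => (hD1c.integral_hasStrictDerivAt 0 x).hasDerivAt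
  have hD20 : D2 0 = 0 := by simp [D2]
  refine ⟨fun x => D2 x - x * (D2 c / c), fun x => D1 x - 1 * (D2 c / c),
    fun x => (hD2 x).sub ((hasDerivAt_id x).mul_const _), fun x => (hD1 x).sub_const _, ?_⟩
  intro x hx0 hxc
  by_contra hne
  set X : ℝ := (∫ s in t0..t1, Real.sin (k * x) * q x s) - (D2 x - x * (D2 c / c)) with hX
  have hXne : 0 < |X| := abs_pos.2 (sub_ne_zero.2 hne)
  set T : ℝ := t1 - t0 with hT
  have hTpos : 0 < T := sub_pos.2 ht
  set C : ℝ := (1 + T) * T + (2 + 2 * T) * c * c with hC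
  have hCpos : 0 < C := by positivity
  set ε : ℝ := |X| / (2 * C) with hεd
  have hε : 0 < ε := by positivity
  obtain ⟨pg, ⟨Sg, -⟩, hpg⟩ := approxP (t0 := t0) (t1 := t1) hc hk hg hε
  obtain ⟨pq, ⟨-, Sq⟩, hpq⟩ := approxP (t0 := t0) (t1 := t1) hc hk hq hε
  obtain ⟨v, vx, vxx, vt, a1, a2, a3, a4, a5, a6, a7, a8, a9, a10, a11⟩ := Sg.add Sq
  have hsin : ∀ y : ℝ, |Real.sin y| ≤ 1 := Real.abs_sin_le_one
  have a10' : ∀ x t, vt x t - vxx x t = vt x t - vxx x t := fun _ _ => rfl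
  have hf : ∀ x t, 0 ≤ x → x ≤ c → t0 ≤ t → t ≤ t1 →
      |vt x t - vxx x t - Real.sin (k * x) * g x t| ≤ ε := by
    intro x t h1 h2 h3 h4
    rw [a10]
    have : Real.sin (k * x) * pg x t + 0 - Real.sin (k * x) * g x t
      = Real.sin (k * x) * (pg x t - g x t) := by ring
    simp only [this, abs_mul]
    exact (mul_le_of_le_one_left (abs_nonneg _) (hsin _)).trans (hpg x t h1 h2 h3 h4)
  have hi : ∀ x, 0 ≤ x → x ≤ c → |v x t0 - Real.sin (k * x) * q x t0| ≤ ε := by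
    intro x h1 h2
    rw [a11]
    have : 0 + Real.sin (k * x) * pq x t0 - Real.sin (k * x) * q x t0
      = Real.sin (k * x) * (pq x t0 - q x t0) := by ring
    simp only [this, abs_mul]
    exact (mul_le_of_le_one_left (abs_nonneg _) (hsin _)).trans (hpq x t0 h1 h2 le_rfl ht.le)
  have hvz : ∀ t, t0 ≤ t → t ≤ t1 → ∀ x, 0 ≤ x → x ≤ c →
      |Real.sin (k * x) * q x t - v x t| ≤ ε * (1 + T) := by
    intro t h1 h2 x h3 h4
    have e1 := heat_approx hc hk ht hq hZ hε a1 a5 a6 a7 a8 a9 a10' hf hi 1 (by simp) t h1 h2 x h3 h4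
    have e2 := heat_approx hc hk ht hq hZ hε a1 a5 a6 a7 a8 a9 a10' hf hi (-1) (by simp) t h1 h2 x h3 h4
    have e3 : ε * (1 + (t - t0)) ≤ ε * (1 + T) := mul_le_mul_of_nonneg_left (by linarith) hε.le
    rw [abs_le]; constructor <;> linarith
  have hbv := small_bvp (e := fun x => (∫ s in t0..t1, v x s) - (D2 x - x * (D2 c / c)))
    (e' := fun x => (∫ s in t0..t1, vx x s) - (D1 x - 1 * (D2 c / c)))
    (e'' := fun x => (∫ s in t0..t1, vxx x s) - D x) (M := ε * (2 + 2 * T)) hc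
    (fun x => (diff_under (a := x - 1) (c := x + 1) a1 a2 ht.le (by linarith) (by linarith)
      (fun s _ _ y _ _ => a5 y s)).sub ((hD2 x).sub ((hasDerivAt_id x).mul_const _)))
    (fun x => (diff_under (a := x - 1) (c := x + 1) a2 a3 ht.le (by linarith) (by linarith)
      (fun s _ _ y _ _ => a6 y s)).sub ((hD1 x).sub_const _))
    (by simp [a8, hD20]) (by simp only [a9]; field_simp; simp) ?_ x hx0 hxc
  · have h1 := int_close ht.le (slice_cont' (W := fun x t => Real.sin (k * x) * q x t) hqs x) (slice_cont' a1 x)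
      (fun s h1 h2 => hvz s h1 h2 x hx0 hxc)
    have h2 : |X| ≤ ε * C := by
      have e1 : X = ((∫ s in t0..t1, Real.sin (k * x) * q x s) - ∫ s in t0..t1, v x s)
        + ((∫ s in t0..t1, v x s) - (D2 x - x * (D2 c / c))) := by rw [hX]; ring
      rw [e1]
      refine (abs_add_le _ _).trans ((add_le_add h1 hbv).trans (le_of_eq ?_))
      rw [hC]; ring
    have h3 : ε * C = |X| / 2 := by rw [hεd]; field_simp
    linarith
  · intro y hy0 hyc
    have h1 : ∫ s in t0..t1, vxx y s = v y t1 - v y t0 - ∫ s in t0..t1, (vt y s - vxx y s) := by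
      rw [intervalIntegral.integral_sub ((slice_cont' a4 y).intervalIntegrable _ _)
        ((slice_cont' a3 y).intervalIntegrable _ _),
        intervalIntegral.integral_eq_sub_of_hasDerivAt (fun s _ => a7 y s)
          ((slice_cont' a4 y).intervalIntegrable _ _)]
      ring
    have h2 := int_close (f := fun s => vt y s - vxx y s) ht.le ((slice_cont' a4 y).sub (slice_cont' a3 y)) (slice_cont' (W := fun x t => Real.sin (k * x) * g x t) hgs y)
      (fun s h1 h2 => hf y s hy0 hyc h1 h2)
    have h3 := hvz t1 ht.le le_rfl y hy0 hyc
    have h4 := hi y hy0 hyc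
    simp only [h1, hD]
    rw [abs_le] at h2 h3 h4 ⊢
    constructor <;> nlinarith [h2.1, h2.2, h3.1, h3.2, h4.1, h4.2]


lemma reg {W V : ℝ → ℝ → ℝ} (hW : Continuous fun p : ℝ × ℝ => W p.1 p.2)
    (hV : Continuous fun p : ℝ × ℝ => V p.1 p.2) {t0 t1 c : ℝ} (ht : t0 < t1) (hc : 0 < c)
    (hd : ∀ t, t0 < t → t ≤ t1 → ∀ x, 0 < x → x < c → ∃ wt wxx,
      HasDerivAt (fun y => W y t) (V x t) x ∧ HasDerivAt (fun y => V y t) wxx x ∧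
      HasDerivAt (fun s => W x s) wt t ∧ wt = wxx + x / 2 * V x t)
    {x : ℝ} (hx0 : 0 < x) (hxc : x < c) :
    HasDerivAt (fun y => ∫ s in t0..t1, V y s)
      (W x t1 - W x t0 - x / 2 * ∫ s in t0..t1, V x s) x := by
  obtain ⟨k, hk⟩ : ∃ k : ℝ, k * c = Real.pi := ⟨Real.pi / c, by field_simp⟩
  have hkpos : 0 < k := by
    have := Real.pi_pos; rw [← hk] at this; exact pos_of_mul_pos_left this hc.le
  have hdW : ∀ s, t0 < s → s ≤ t1 → ∀ y, 0 < y → y < c → HasDerivAt (fun y => W y s) (V y s) y := by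
    intro s h1 h2 y h3 h4
    obtain ⟨_, _, h, _⟩ := hd s h1 h2 y h3 h4
    exact h
  have hs : ∀ y : ℝ, HasDerivAt (fun y => Real.sin (k * y)) (k * Real.cos (k * y)) y := by
    intro y
    have : HasDerivAt (fun x : ℝ => k * x) (k * 1) y := (hasDerivAt_id y).const_mul k
    exact this.sin.congr_deriv (by ring)
  have hcs : ∀ y : ℝ, HasDerivAt (fun y => Real.cos (k * y)) (-(k * Real.sin (k * y))) y := by
    intro y
    have : HasDerivAt (fun x : ℝ => k * x) (k * 1) y := (hasDerivAt_id y).const_mul k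
    exact this.cos.congr_deriv (by ring)
  have hsq : ∀ y : ℝ, Real.cos (k * y) ^ 2 = 1 - Real.sin (k * y) ^ 2 := fun y => by
    rw [Real.cos_sq']
  obtain ⟨K, K', hK, hK', hrep⟩ := heat_rep (q := fun x t => Real.sin (k * x) ^ 2 * W x t)
    (g := fun x t => Real.sin (k * x) ^ 2 * (x / 2) * V x t
      - 6 * k * Real.sin (k * x) * Real.cos (k * x) * V x t
      - (6 * k ^ 2 * Real.cos (k * x) ^ 2 - 3 * k ^ 2 * Real.sin (k * x) ^ 2) * W x t)
    hc hk ht (by fun_prop) (by fun_prop) (by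
      intro t h1 h2 y h3 h4
      obtain ⟨wt, wxx, e1, e2, e3, e4⟩ := hd t h1 h2 y h3 h4
      refine ⟨fun y => 3 * k * Real.sin (k * y) ^ 2 * Real.cos (k * y) * W y t
        + Real.sin (k * y) ^ 3 * V y t,
        (6 * k ^ 2 * Real.sin (k * y) * Real.cos (k * y) ^ 2 - 3 * k ^ 2 * Real.sin (k * y) ^ 3) * W y t
          + 6 * k * Real.sin (k * y) ^ 2 * Real.cos (k * y) * V y t + Real.sin (k * y) ^ 3 * wxx,
        Real.sin (k * y) * (Real.sin (k * y) ^ 2 * wt), ?_, ?_, ?_, ?_⟩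
      · filter_upwards [Ioo_mem_nhds h3 h4] with z hz
        refine ((hs z).mul (((hs z).pow 2).mul (hdW t h1 h2 z hz.1 hz.2))).congr_deriv ?_
        simp only [Pi.pow_apply, Pi.mul_apply]; push_cast; ring
      · refine ((((((hs y).pow 2).const_mul (3 * k)).mul (hcs y)).mul e1).add
          (((hs y).pow 3).mul e2)).congr_deriv ?_
        simp only [Pi.pow_apply, Pi.mul_apply]; push_cast; ring
      · exact (e3.const_mul _).const_mul _
      · rw [e4]; ring)
  have hH : ∀ y, 0 < y → y < c → HasDerivAt (fun y => ∫ s in t0..t1, W y s) (∫ s in t0..t1, V y s) y :=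
    fun y h1 h2 => diff_under hW hV ht.le h1 h2 hdW
  have hrep2 : ∀ y, 0 ≤ y → y ≤ c → Real.sin (k * y) ^ 3 * (∫ s in t0..t1, W y s) = K y := by
    intro y h1 h2
    rw [← hrep y h1 h2, ← intervalIntegral.integral_const_mul]
    congr 1; ext s; ring
  have hpos : ∀ y, 0 < y → y < c → 0 < Real.sin (k * y) := by
    intro y h1 h2
    apply Real.sin_pos_of_pos_of_lt_pi (mul_pos hkpos h1)
    rw [← hk]; exact mul_lt_mul_of_pos_left h2 hkpos
  have hG : ∀ y, 0 < y → y < c → 3 * k * Real.sin (k * y) ^ 2 * Real.cos (k * y) * (∫ s in t0..t1, W y s)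
      + Real.sin (k * y) ^ 3 * (∫ s in t0..t1, V y s) = K' y := by
    intro y h1 h2
    have e1 := ((hs y).pow 3).mul (hH y h1 h2)
    have e2 : HasDerivAt (fun y => Real.sin (k * y) ^ 3 * (∫ s in t0..t1, W y s)) (K' y) y := by
      refine (hK y).congr_of_eventuallyEq ?_
      filter_upwards [Ioo_mem_nhds h1 h2] with z hz
      exact hrep2 z hz.1.le hz.2.le
    have e3 := e1.unique e2
    rw [← e3]
    simp only [Pi.pow_apply]; push_cast; ring
  have hsx := (hpos x hx0 hxc).ne'
  have hR : HasDerivAt (fun y => (K' y - 3 * k * Real.sin (k * y) ^ 2 * Real.cos (k * y)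
      * (∫ s in t0..t1, W y s)) / Real.sin (k * y) ^ 3) _ x :=
    ((hK' x).sub (((((hs x).pow 2).const_mul (3 * k)).mul (hcs x)).mul (hH x hx0 hxc))).div
      ((hs x).pow 3) (pow_ne_zero 3 hsx)
  have hR2 := hR.congr_of_eventuallyEq (f₁ := fun y => ∫ s in t0..t1, V y s) (by
    filter_upwards [Ioo_mem_nhds hx0 hxc] with y hy
    have := hpos y hy.1 hy.2
    rw [eq_div_iff (by positivity), ← hG y hy.1 hy.2]; ring)
  refine hR2.congr_deriv ?_
  have hWi := (slice_cont' hW x).intervalIntegrable (μ := MeasureTheory.volume) t0 t1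
  have hVi := (slice_cont' hV x).intervalIntegrable (μ := MeasureTheory.volume) t0 t1
  have hint : ∫ s in t0..t1, Real.sin (k * x) * (Real.sin (k * x) ^ 2 * (x / 2) * V x s
      - 6 * k * Real.sin (k * x) * Real.cos (k * x) * V x s
      - (6 * k ^ 2 * Real.cos (k * x) ^ 2 - 3 * k ^ 2 * Real.sin (k * x) ^ 2) * W x s)
      = Real.sin (k * x) * (Real.sin (k * x) ^ 2 * (x / 2) * (∫ s in t0..t1, V x s)
      - 6 * k * Real.sin (k * x) * Real.cos (k * x) * (∫ s in t0..t1, V x s)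
      - (6 * k ^ 2 * Real.cos (k * x) ^ 2 - 3 * k ^ 2 * Real.sin (k * x) ^ 2) * ∫ s in t0..t1, W x s) := by
    rw [intervalIntegral.integral_const_mul, intervalIntegral.integral_sub,
      intervalIntegral.integral_sub]
    · simp only [intervalIntegral.integral_const_mul]
    · exact hVi.const_mul _
    · exact hVi.const_mul _
    · exact (hVi.const_mul _).sub (hVi.const_mul _)
    · exact hWi.const_mul _
  simp only [Pi.pow_apply, Pi.mul_apply, Pi.sub_apply]
  rw [hint, ← hG x hx0 hxc]
  field_simp
  push_cast
  ring


lemma swap_int {W : ℝ → ℝ → ℝ} (hW : Continuous fun p : ℝ × ℝ => W p.1 p.2) (a b c d : ℝ) :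
    ∫ y in a..b, (∫ s in c..d, W y s) = ∫ s in c..d, ∫ y in a..b, W y s := by
  apply MeasureTheory.intervalIntegral_intervalIntegral_swap
  have h1 : MeasureTheory.IntegrableOn (Function.uncurry W) (uIcc a b ×ˢ uIcc c d)
      MeasureTheory.volume :=
    (ContinuousOn.integrableOn_compact (isCompact_uIcc.prod isCompact_uIcc)
      (hW.continuousOn))
  exact h1.mono_set (Set.prod_mono uIoc_subset_uIcc uIoc_subset_uIcc)

lemma P_id {W V : ℝ → ℝ → ℝ} (hW : Continuous fun p : ℝ × ℝ => W p.1 p.2)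
    (hV : Continuous fun p : ℝ × ℝ => V p.1 p.2) {t0 t1 c h : ℝ} (ht : t0 < t1) (hc : 0 < c)
    (hd : ∀ t, t0 < t → t ≤ t1 → ∀ x, 0 < x → x < c → ∃ wt wxx,
      HasDerivAt (fun y => W y t) (V x t) x ∧ HasDerivAt (fun y => V y t) wxx x ∧
      HasDerivAt (fun s => W x s) wt t ∧ wt = wxx + x / 2 * V x t)
    (hfl : ∀ s, V 0 s = -h) {x : ℝ} (hx0 : 0 ≤ x) (hxc : x ≤ c) :
    (∫ y in (0:ℝ)..x, W y t1) - (∫ y in (0:ℝ)..x, W y t0) =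
      ∫ s in t0..t1, (V x s + h + x / 2 * W x s - 1 / 2 * ∫ y in (0:ℝ)..x, W y s) := by
  have hdW : ∀ s, t0 < s → s ≤ t1 → ∀ y, 0 < y → y < c → HasDerivAt (fun y => W y s) (V y s) y := by
    intro s h1 h2 y h3 h4
    obtain ⟨_, _, h, _⟩ := hd s h1 h2 y h3 h4
    exact h
  have hGc : Continuous fun y => ∫ s in t0..t1, V y s :=
      intervalIntegral.continuous_parametric_intervalIntegral_of_continuous' hV t0 t1
  have hHc : Continuous fun y => ∫ s in t0..t1, W y s :=
      intervalIntegral.continuous_parametric_intervalIntegral_of_continuous' hW t0 t1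
  have c1 := slice_cont hW t1
  have c0 := slice_cont hW t0
  have e1 := intervalIntegral.integral_eq_sub_of_hasDerivAt_of_le hx0 hGc.continuousOn
    (fun y hy => reg hW hV ht hc hd hy.1 (hy.2.trans_le hxc))
    ((by fun_prop : Continuous fun y => W y t1 - W y t0 - y / 2 * ∫ s in t0..t1, V y s).intervalIntegrable _ _)
  have e2 := intervalIntegral.integral_eq_sub_of_hasDerivAt_of_le hx0
    (f := fun y => y / 2 * ∫ s in t0..t1, W y s)
    (f' := fun y => 1 / 2 * (∫ s in t0..t1, W y s) + y / 2 * ∫ s in t0..t1, V y s)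
    (by fun_prop : Continuous fun y => y / 2 * ∫ s in t0..t1, W y s).continuousOn
    (fun y hy => ((hasDerivAt_id y).div_const 2).mul
      (diff_under hW hV ht.le hy.1 (hy.2.trans_le hxc) hdW))
    ((by fun_prop : Continuous fun y => 1 / 2 * (∫ s in t0..t1, W y s)
      + y / 2 * ∫ s in t0..t1, V y s).intervalIntegrable _ _)
  have i1 : ∀ f : ℝ → ℝ, Continuous f → ∀ a b, IntervalIntegrable f MeasureTheory.volume a b :=
    fun f hf a b => hf.intervalIntegrable a b
  rw [intervalIntegral.integral_sub (i1 _ (by fun_prop) _ _) (i1 _ (by fun_prop) _ _),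
    intervalIntegral.integral_sub (i1 _ (by fun_prop) _ _) (i1 _ (by fun_prop) _ _)] at e1
  rw [intervalIntegral.integral_add (i1 _ (by fun_prop) _ _) (i1 _ (by fun_prop) _ _),
    intervalIntegral.integral_const_mul, swap_int hW] at e2
  have hPc : Continuous fun s => ∫ y in (0:ℝ)..x, W y s :=
    slice_cont' (W := fun x s => ∫ y in (0:ℝ)..x, W y s) (param_cont hW continuous_const continuous_fst) x
  have v1 := slice_cont' hV x
  have w1 := slice_cont' hW x
  rw [intervalIntegral.integral_sub (i1 _ (by fun_prop) _ _) (i1 _ (by fun_prop) _ _),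
    intervalIntegral.integral_add (i1 _ (by fun_prop) _ _) (i1 _ (by fun_prop) _ _),
    intervalIntegral.integral_add (i1 _ (by fun_prop) _ _) (i1 _ (by fun_prop) _ _),
    intervalIntegral.integral_const_mul, intervalIntegral.integral_const_mul]
  simp only [hfl, intervalIntegral.integral_const, smul_eq_mul, zero_div, zero_mul] at e1 e2 ⊢
  linarith


noncomputable def Th (h : ℝ) (W V : ℝ → ℝ → ℝ) (x s : ℝ) : ℝ :=
  V x s + h + x / 2 * W x s - 1 / 2 * ∫ y in (0:ℝ)..x, W y s

lemma Th_cont {h : ℝ} {W V : ℝ → ℝ → ℝ} (hW : Continuous fun p : ℝ × ℝ => W p.1 p.2)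
    (hV : Continuous fun p : ℝ × ℝ => V p.1 p.2) : Continuous fun p : ℝ × ℝ => Th h W V p.1 p.2 := by
  have := param_cont hW continuous_const (f := fun _ => (0:ℝ)) continuous_fst
  unfold Th
  fun_prop

section
variable {W V : ℝ → ℝ → ℝ} {b : ℝ → ℝ} {t0 h : ℝ}

lemma P_id2 (hW : Continuous fun p : ℝ × ℝ => W p.1 p.2)
    (hV : Continuous fun p : ℝ × ℝ => V p.1 p.2)
    (hd : ∀ t, t0 < t → ∀ x, 0 < x → x < b t → ∃ wt wxx,
      HasDerivAt (fun y => W y t) (V x t) x ∧ HasDerivAt (fun y => V y t) wxx x ∧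
      HasDerivAt (fun s => W x s) wt t ∧ wt = wxx + x / 2 * V x t)
    (hfl : ∀ s, V 0 s = -h) {x s1 s2 : ℝ} (h1 : t0 ≤ s1) (h2 : t0 ≤ s2) (hx : 0 < x)
    (hb : ∀ r ∈ uIcc s1 s2, x ≤ b r) :
    (∫ y in (0:ℝ)..x, W y s2) - (∫ y in (0:ℝ)..x, W y s1) = ∫ s in s1..s2, Th h W V x s := by
  rcases lt_trichotomy s1 s2 with h3 | h3 | h3
  · rw [uIcc_of_le h3.le] at hb
    exact P_id hW hV h3 hx (fun t e1 e2 y e3 e4 =>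
      hd t (h1.trans_lt e1) y e3 (e4.trans_le (hb t ⟨e1.le, e2⟩))) hfl hx.le le_rfl
  · subst h3; simp
  · rw [uIcc_of_ge h3.le] at hb
    rw [intervalIntegral.integral_symm s2 s1, ← neg_sub]
    congr 1
    exact P_id hW hV h3 hx (fun t e1 e2 y e3 e4 =>
      hd t (h2.trans_lt e1) y e3 (e4.trans_le (hb t ⟨e1.le, e2⟩))) hfl hx.le le_rfl

lemma P_deriv (hW : Continuous fun p : ℝ × ℝ => W p.1 p.2)
    (hV : Continuous fun p : ℝ × ℝ => V p.1 p.2) (hbc : Continuous b)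
    (hd : ∀ t, t0 < t → ∀ x, 0 < x → x < b t → ∃ wt wxx,
      HasDerivAt (fun y => W y t) (V x t) x ∧ HasDerivAt (fun y => V y t) wxx x ∧
      HasDerivAt (fun s => W x s) wt t ∧ wt = wxx + x / 2 * V x t)
    (hfl : ∀ s, V 0 s = -h) {x t : ℝ} (ht : t0 < t) (hx : 0 < x) (hxb : x < b t) :
    HasDerivAt (fun s => ∫ y in (0:ℝ)..x, W y s) (Th h W V x t) t := by
  have hc := slice_cont' (Th_cont (h := h) hW hV) x
  have h1 : HasDerivAt (fun s => (∫ y in (0:ℝ)..x, W y t) + ∫ r in t..s, Th h W V x r)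
      (Th h W V x t) t := ((hc.integral_hasStrictDerivAt t t).hasDerivAt).const_add _
  refine h1.congr_of_eventuallyEq ?_
  have h2 : ∀ᶠ s in 𝓝 t, x < b s := hbc.continuousAt.eventually (lt_mem_nhds hxb)
  have h3 : ∀ᶠ s in 𝓝 t, t0 < s := lt_mem_nhds ht
  obtain ⟨δ, hδ, hδ2⟩ := Metric.eventually_nhds_iff.1 (h2.and h3)
  refine Metric.eventually_nhds_iff.2 ⟨δ, hδ, fun s hs => ?_⟩
  have := P_id2 hW hV hd hfl ht.le (hδ2 hs).2.le hx (fun r hr => (hδ2 (y := r) (by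
    refine lt_of_le_of_lt ?_ hs
    rw [Real.dist_eq, Real.dist_eq]
    exact abs_sub_left_of_mem_uIcc hr)).1.le)
  linarith

lemma m_deriv (hW : Continuous fun p : ℝ × ℝ => W p.1 p.2)
    (hV : Continuous fun p : ℝ × ℝ => V p.1 p.2)
    (hd : ∀ t, t0 < t → ∀ x, 0 < x → x < b t → ∃ wt wxx,
      HasDerivAt (fun y => W y t) (V x t) x ∧ HasDerivAt (fun y => V y t) wxx x ∧
      HasDerivAt (fun s => W x s) wt t ∧ wt = wxx + x / 2 * V x t)
    (hfl : ∀ s, V 0 s = -h) {t b' : ℝ} (ht : t0 < t) (hb' : HasDerivAt b b' t) (hbt : 0 < b t)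
    (hWb : W (b t) t = 0) :
    HasDerivAt (fun s => ∫ y in (0:ℝ)..b s, W y s) (Th h W V (b t) t) t := by
  rw [hasDerivAt_iff_isLittleO, Asymptotics.isLittleO_iff]
  intro ε hε
  set L : ℝ := |b'| + 1 with hL
  have hLpos : 0 < L := by positivity
  set ε' : ℝ := ε / (1 + 3 * L) with hε'
  have hε'pos : 0 < ε' := by positivity
  have hTc := Th_cont (h := h) hW hV
  obtain ⟨η1, hη1, hη1'⟩ := Metric.continuousAt_iff.1 (hW.continuousAt (x := (b t, t))) ε' hε'pos
  obtain ⟨η2, hη2, hη2'⟩ := Metric.continuousAt_iff.1 (hTc.continuousAt (x := (b t, t))) ε' hε'pos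
  have hLip : ∀ᶠ s in 𝓝 t, |b s - b t| ≤ L * |s - t| := by
    have h1 := hasDerivAt_iff_isLittleO.1 hb'
    have h2 := Asymptotics.isLittleO_iff.1 h1 one_pos
    filter_upwards [h2] with s hs
    simp only [Real.norm_eq_abs, smul_eq_mul] at hs
    have : |b s - b t| ≤ |b s - b t - (s - t) * b'| + |(s - t) * b'| := by
      have := abs_add_le (b s - b t - (s - t) * b') ((s - t) * b')
      simpa using this
    rw [abs_mul] at this
    rw [hL]; nlinarith
  have h3 : ∀ᶠ s in 𝓝 t, t0 < s := lt_mem_nhds ht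
  obtain ⟨δ, hδ, hδ2⟩ := Metric.eventually_nhds_iff.1 (hLip.and h3)
  have hcont : Continuous fun s : ℝ => (L + 1) * |s - t| := by fun_prop
  have hsm : ∀ r : ℝ, 0 < r → ∀ᶠ s in 𝓝 t, (L + 1) * |s - t| < r := fun r hr =>
    hcont.continuousAt.eventually (gt_mem_nhds (by simpa using hr))
  filter_upwards [Metric.ball_mem_nhds t hδ, hsm _ hη1, hsm _ hη2, hsm _ hbt] with s hs hs1 hs2 hs3
  have hs0 := abs_nonneg (s - t)
  have hL0 : 0 ≤ L * |s - t| := by positivity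
  set x1 : ℝ := b t - L * |s - t| with hx1
  have hx1pos : 0 < x1 := by nlinarith
  have hbs := abs_le.1 (hδ2 hs).1
  have hr : ∀ r ∈ uIcc t s, |r - t| ≤ |s - t| := fun r hr => abs_sub_left_of_mem_uIcc hr
  have key := P_id2 hW hV hd hfl ht.le (hδ2 hs).2.le hx1pos (fun r hr' => by
    have e1 := hr r hr'
    have e2 := abs_le.1 (hδ2 (y := r) (lt_of_le_of_lt e1 hs)).1
    have : L * |r - t| ≤ L * |s - t| := mul_le_mul_of_nonneg_left e1 hLpos.le
    linarith [e2.1])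
  have hnear : ∀ η, (L + 1) * |s - t| < η → ∀ y r, |y - b t| ≤ L * |s - t| → |r - t| ≤ |s - t| →
      dist (y, r) (b t, t) < η := by
    intro η hη y r hy hr
    rw [Prod.dist_eq]
    simp only [Real.dist_eq]
    apply max_lt <;> nlinarith
  have hWs : ∀ y r, |y - b t| ≤ L * |s - t| → |r - t| ≤ |s - t| → |W y r| ≤ ε' := by
    intro y r hy hr
    have := hη1' (hnear _ hs1 y r hy hr)
    simp only [hWb, Real.dist_eq, sub_zero] at this
    exact this.le
  have c1 := fun r => slice_cont hW r
  have split : ∀ r z, ∫ y in (0:ℝ)..z, W y r = (∫ y in (0:ℝ)..x1, W y r) + ∫ y in x1..z, W y r :=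
    fun r z => (intervalIntegral.integral_add_adjacent_intervals ((c1 r).intervalIntegrable _ _)
      ((c1 r).intervalIntegrable _ _)).symm
  have b1 : |∫ y in x1..b s, W y s| ≤ ε' * (2 * L * |s - t|) := by
    have := intervalIntegral.norm_integral_le_of_norm_le_const (a := x1) (b := b s)
      (f := fun y => W y s) (C := ε') (by
        intro y hy
        rw [uIoc_of_le (by linarith [hbs.1])] at hy
        exact hWs y s (abs_le.2 ⟨by linarith [hy.1], by linarith [hy.2, hbs.2]⟩) le_rfl)
    refine this.trans (mul_le_mul_of_nonneg_left ?_ hε'pos.le)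
    rw [abs_le]; constructor <;> nlinarith [hbs.1, hbs.2]
  have b2 : |∫ y in x1..b t, W y t| ≤ ε' * (L * |s - t|) := by
    have := intervalIntegral.norm_integral_le_of_norm_le_const (a := x1) (b := b t)
      (f := fun y => W y t) (C := ε') (by
        intro y hy
        rw [uIoc_of_le (by linarith)] at hy
        exact hWs y t (abs_le.2 ⟨by linarith [hy.1], by linarith [hy.2]⟩) (by simp))
    refine this.trans (mul_le_mul_of_nonneg_left ?_ hε'pos.le)
    rw [abs_le]; constructor <;> nlinarith
  have b3 : |(∫ r in t..s, Th h W V x1 r) - (s - t) * Th h W V (b t) t| ≤ ε' * |s - t| := by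
    have e1 : (s - t) * Th h W V (b t) t = ∫ r in t..s, Th h W V (b t) t := by simp
    rw [e1, ← intervalIntegral.integral_sub ((slice_cont' hTc x1).intervalIntegrable _ _)
      (continuous_const.intervalIntegrable _ _)]
    refine intervalIntegral.norm_integral_le_of_norm_le_const (E := ℝ) (C := ε')
      (f := fun r => Th h W V x1 r - Th h W V (b t) t) ?_
    intro r hr'
    have := hη2' (hnear _ hs2 x1 r (by rw [hx1]; simp [abs_of_pos hLpos])
      (hr r (uIoc_subset_uIcc hr')))
    exact this.le
  rw [split s (b s), split t (b t)]
  simp only [Real.norm_eq_abs, smul_eq_mul]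
  have hfin : ε * |s - t| = ε' * (2 * L * |s - t|) + ε' * (L * |s - t|) + ε' * |s - t| := by
    rw [hε']; field_simp; ring
  rw [hfin]
  rw [abs_le] at b1 b2 b3 ⊢
  constructor <;> linarith [b1.1, b1.2, b2.1, b2.2, b3.1, b3.2]
end


noncomputable def bT (b : ℝ → ℝ) (t : ℝ) : ℝ := b (max t 0)
noncomputable def WT (W : ℝ → ℝ → ℝ) (b : ℝ → ℝ) (x t : ℝ) : ℝ :=
  W (min (max x 0) (b (max t 0))) (max t 0)
noncomputable def VV (W : ℝ → ℝ → ℝ) (x t : ℝ) : ℝ := deriv (fun y => W y t) x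
noncomputable def VT (t0 : ℝ) (W : ℝ → ℝ → ℝ) (b : ℝ → ℝ) (x t : ℝ) : ℝ :=
  VV W (min (max x 0) (b (max t t0))) (max t t0)

section
variable {h b0 : ℝ} {u0 : ℝ → ℝ} {W : ℝ → ℝ → ℝ} {b : ℝ → ℝ}

lemma cl_bderiv (S : IsClassicalSol21 h b0 u0 W b) {t : ℝ} (ht : 0 < t) :
    HasDerivAt b (deriv b t) t := by
  have h1 := (S.1.differentiableOn one_ne_zero) t ht.le
  exact (h1.differentiableAt (Ici_mem_nhds ht)).hasDerivAt

lemma cl_bpos (S : IsClassicalSol21 h b0 u0 W b) (hh : 0 < h) (hb0 : 0 < b0) :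
    ∀ t, 0 ≤ t → 0 < b t := by
  by_contra hcon
  push Not at hcon
  obtain ⟨s, hs0, hs⟩ := hcon
  have hbder := fun {t : ℝ} => cl_bderiv S (t := t)
  obtain ⟨hb, hbz, -, -, -, hfl, -, hst, -⟩ := S
  let A : Set ℝ := Ici 0 ∩ b ⁻¹' Iic 0
  have hA : IsClosed A := hb.continuousOn.preimage_isClosed_of_isClosed isClosed_Ici isClosed_Iic
  have hne : A.Nonempty := ⟨s, hs0, hs⟩
  have hbd : BddBelow A := ⟨0, fun x hx => hx.1⟩
  have hmem : sInf A ∈ A := hA.csInf_mem hne hbd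
  set τ := sInf A with hτ
  have hτ0 : 0 < τ := by
    rcases (show (0:ℝ) ≤ τ from hmem.1).eq_or_lt with h1 | h1
    · exfalso
      have : b τ ≤ 0 := hmem.2
      rw [← h1, hbz] at this; linarith
    · exact h1
  have hbef : ∀ r, 0 ≤ r → r < τ → 0 < b r := by
    intro r h1 h2
    by_contra h3
    exact absurd (csInf_le hbd (show r ∈ A from ⟨h1, not_lt.1 h3⟩)) (not_le.2 h2)
  have hd : HasDerivAt b (deriv b τ) τ := hbder hτ0
  have hev : ∀ᶠ r in 𝓝[<] τ, 0 < b r := by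
    have : ∀ᶠ r in 𝓝[<] τ, 0 < r := eventually_nhdsWithin_of_eventually_nhds (lt_mem_nhds hτ0)
    filter_upwards [this, self_mem_nhdsWithin] with r h1 h2
    exact hbef r h1.le h2
  have hge : 0 ≤ b τ := by
    have h1 : Tendsto b (𝓝[<] τ) (𝓝 (b τ)) := hd.continuousAt.continuousWithinAt
    exact ge_of_tendsto h1 (hev.mono fun r h => h.le)
  have hz : b τ = 0 := le_antisymm hmem.2 hge
  have h1 := hst τ hτ0
  rw [hz, hfl τ hτ0] at h1
  have h2 := left_deriv_nonneg hd.neg (by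
    filter_upwards [hev] with r hr
    simp only [Pi.neg_apply, hz]; linarith)
  linarith

lemma cl_Wb (S : IsClassicalSol21 h b0 u0 W b) (hh : 0 < h) (hb0 : 0 < b0) :
    ∀ t, 0 ≤ t → W (b t) t = 0 := by
  have hpos := cl_bpos S hh hb0
  obtain ⟨hb, hbz, hWc, -, -, hfl, hW0, hst, -⟩ := S
  have hc : ContinuousOn (fun t => W (b t) t) (Ici 0) := by
    have : ContinuousOn (fun t => (b t, t)) (Ici 0) := hb.continuousOn.prodMk continuousOn_id
    exact hWc.comp this (fun t ht => ⟨ht, (hpos t ht).le, le_rfl⟩)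
  intro t ht
  rcases ht.eq_or_lt with h1 | h1
  · subst h1
    have h2 : Tendsto (fun t => W (b t) t) (𝓝[>] 0) (𝓝 (W (b 0) 0)) :=
      (hc 0 self_mem_Ici).mono_left (nhdsWithin_mono _ Ioi_subset_Ici_self)
    refine tendsto_nhds_unique h2 (tendsto_const_nhds.congr' ?_)
    filter_upwards [self_mem_nhdsWithin] with r hr
    exact (hW0 r hr).symm
  · exact hW0 t h1

lemma cl_bT (S : IsClassicalSol21 h b0 u0 W b) : Continuous (bT b) := by
  have := S.1.continuousOn
  exact this.comp_continuous (f := fun t : ℝ => max t 0) (by fun_prop) fun t => mem_Ici.2 (le_max_right _ _)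

lemma cl_WT (S : IsClassicalSol21 h b0 u0 W b) (hh : 0 < h) (hb0 : 0 < b0) :
    Continuous fun p : ℝ × ℝ => WT W b p.1 p.2 := by
  have hb := cl_bT S
  have hb2 : Continuous fun p : ℝ × ℝ => b (max p.2 0) := hb.comp continuous_snd
  refine S.2.2.1.comp_continuous
    (f := fun p : ℝ × ℝ => (min (max p.1 0) (b (max p.2 0)), max p.2 0))
    (((continuous_fst.max continuous_const).min hb2).prodMk (continuous_snd.max continuous_const)) fun p => ?_
  exact ⟨le_max_right _ _, le_min (le_max_right _ _) (cl_bpos S hh hb0 _ (le_max_right _ _)).le,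
    min_le_right _ _⟩

lemma cl_VT (S : IsClassicalSol21 h b0 u0 W b) (hh : 0 < h) (hb0 : 0 < b0) {t0 : ℝ} (ht0 : 0 < t0) :
    Continuous fun p : ℝ × ℝ => VT t0 W b p.1 p.2 := by
  have hp : ∀ t : ℝ, 0 < max t t0 := fun t => lt_max_of_lt_right ht0
  have hb : Continuous fun t : ℝ => b (max t t0) :=
    S.1.continuousOn.comp_continuous (f := fun t : ℝ => max t t0) (by fun_prop) fun t => (hp t).le
  have hb2 : Continuous fun p : ℝ × ℝ => b (max p.2 t0) := hb.comp continuous_snd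
  refine S.2.2.2.1.comp_continuous
    (f := fun p : ℝ × ℝ => (min (max p.1 0) (b (max p.2 t0)), max p.2 t0))
    (((continuous_fst.max continuous_const).min hb2).prodMk (continuous_snd.max continuous_const)) fun p => ?_
  exact ⟨hp _, le_min (le_max_right _ _) (cl_bpos S hh hb0 _ (hp _).le).le, min_le_right _ _⟩

lemma WT_eq {x t : ℝ} (ht : 0 ≤ t) (hx : 0 ≤ x) (hxb : x ≤ b t) : WT W b x t = W x t := by
  rw [WT, max_eq_left ht, max_eq_left hx, min_eq_left hxb]

lemma bT_eq {t : ℝ} (ht : 0 ≤ t) : bT b t = b t := by rw [bT, max_eq_left ht]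

lemma VT_eq {t0 x t : ℝ} (ht : t0 ≤ t) (hx : 0 ≤ x) (hxb : x ≤ b t) : VT t0 W b x t = VV W x t := by
  rw [VT, max_eq_left ht, max_eq_left hx, min_eq_left hxb]

lemma cl_WTz (S : IsClassicalSol21 h b0 u0 W b) (hh : 0 < h) (hb0 : 0 < b0) {x t : ℝ} (ht : 0 ≤ t)
    (hx : b t ≤ x) : WT W b x t = 0 := by
  rw [WT, max_eq_left ht, max_eq_left ((cl_bpos S hh hb0 t ht).le.trans hx), min_eq_right hx]
  exact cl_Wb S hh hb0 t ht

lemma cl_hd (S : IsClassicalSol21 h b0 u0 W b) {x t : ℝ} (ht : 0 < t)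
    (hx : 0 < x) (hxb : x < b t) : ∃ wt wxx,
      HasDerivAt (fun y => WT W b y t) (VV W x t) x ∧ HasDerivAt (fun y => VV W y t) wxx x ∧
      HasDerivAt (fun s => WT W b x s) wt t ∧ wt = wxx + x / 2 * VV W x t := by
  obtain ⟨d1, d2, d3, e⟩ := S.2.2.2.2.1 t ht x hx hxb
  refine ⟨_, _, d2.hasDerivAt.congr_of_eventuallyEq ?_, d3.hasDerivAt,
    d1.hasDerivAt.congr_of_eventuallyEq ?_, ?_⟩
  · filter_upwards [Ioo_mem_nhds hx hxb] with y hy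
    exact WT_eq ht.le hy.1.le hy.2.le
  · have h1 : ∀ᶠ s in 𝓝 t, x < b s := (cl_bderiv S ht).continuousAt.eventually (lt_mem_nhds hxb)
    filter_upwards [h1, lt_mem_nhds ht] with s h1 h2
    exact WT_eq h2.le hx.le h1.le
  · simp only [VV]; linarith

lemma cl_flux (S : IsClassicalSol21 h b0 u0 W b) (hh : 0 < h) (hb0 : 0 < b0) {t : ℝ} (ht : 0 < t) :
    HasDerivWithinAt (fun y => WT W b y t) (-h) (Ici 0) 0 := by
  have h1 := S.2.2.2.2.2.1 t ht
  have h2 : deriv (fun y => W y t) 0 = -h := by linarith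
  have h3 : DifferentiableAt ℝ (fun y => W y t) 0 := by
    apply differentiableAt_of_deriv_ne_zero
    rw [h2]; linarith
  have h4 := h3.hasDerivAt
  rw [h2] at h4
  have hb := cl_bpos S hh hb0 t ht.le
  refine h4.hasDerivWithinAt.congr_of_eventuallyEq ?_ (WT_eq ht.le le_rfl hb.le)
  have : ∀ᶠ y in 𝓝[≥] (0:ℝ), y < b t := eventually_nhdsWithin_of_eventually_nhds (gt_mem_nhds hb)
  filter_upwards [this, self_mem_nhdsWithin] with y h5 h6
  exact WT_eq ht.le h6 h5.le

lemma cl_init (S : IsClassicalSol21 h b0 u0 W b) (hh : 0 < h) (hb0 : 0 < b0)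
    {f : ℝ → ℝ} (hf : Continuous f) (hu : ∀ x, 0 < x → x < b0 → f x ≤ u0 x) :
    ∀ x, 0 ≤ x → x ≤ b0 → f x ≤ WT W b x 0 := by
  have hc := slice_cont (cl_WT S hh hb0) 0
  have hcl : IsClosed {x | f x ≤ WT W b x 0} := isClosed_le hf hc
  have hsub : Ioo 0 b0 ⊆ {x | f x ≤ WT W b x 0} := by
    intro x hx
    have : x ≤ b 0 := by rw [S.2.1]; exact hx.2.le
    show f x ≤ _
    rw [WT_eq le_rfl hx.1.le this, S.2.2.2.2.2.2.2.2 x hx.1 hx.2]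
    exact hu x hx.1 hx.2
  intro x h1 h2
  have := closure_minimal hsub hcl
  rw [closure_Ioo hb0.ne] at this
  exact this ⟨h1, h2⟩

lemma cl_init2 (S : IsClassicalSol21 h b0 u0 W b) (hh : 0 < h) (hb0 : 0 < b0)
    {f : ℝ → ℝ} (hf : Continuous f) (hu : ∀ x, 0 < x → x < b0 → u0 x ≤ f x) :
    ∀ x, 0 ≤ x → x ≤ b0 → WT W b x 0 ≤ f x := by
  have hc := slice_cont (cl_WT S hh hb0) 0
  have hcl : IsClosed {x | WT W b x 0 ≤ f x} := isClosed_le hc hf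
  have hsub : Ioo 0 b0 ⊆ {x | WT W b x 0 ≤ f x} := by
    intro x hx
    have : x ≤ b 0 := by rw [S.2.1]; exact hx.2.le
    show _ ≤ f x
    rw [WT_eq le_rfl hx.1.le this, S.2.2.2.2.2.2.2.2 x hx.1 hx.2]
    exact hu x hx.1 hx.2
  intro x h1 h2
  have := closure_minimal hsub hcl
  rw [closure_Ioo hb0.ne] at this
  exact this ⟨h1, h2⟩

lemma cl_nonneg (S : IsClassicalSol21 h b0 u0 W b) (hh : 0 < h) (hb0 : 0 < b0)
    (hu : ∀ x, 0 < x → x < b0 → 0 ≤ u0 x) : ∀ x t, 0 ≤ x → 0 ≤ t → 0 ≤ WT W b x t := by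
  intro x t hx ht
  rcases le_total x (b t) with h1 | h1
  · have hWc := cl_WT S hh hb0
    have key := wmp 0 0 t (bT b) (fun x => x / 2) (fun x t => - WT W b x t) (cl_bT S)
      (fun x hx => by positivity) hWc.neg ?_ ?_ ?_ ?_ t ht le_rfl x hx (by rwa [bT_eq ht])
    · linarith
    · intro y h2 h3
      rw [bT_eq le_rfl, S.2.1] at h3
      have := cl_init S hh hb0 continuous_const hu y h2 h3
      linarith
    · intro s h2 h3
      rw [bT_eq h2.le, cl_WTz S hh hb0 h2.le le_rfl]; simp
    · intro s h2 h3
      exact Or.inr ⟨- -h, by linarith, (cl_flux S hh hb0 h2).neg⟩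
    · intro s h2 h3 y h4 h5
      rw [bT_eq h2.le] at h5
      obtain ⟨wt, wxx, e1, e2, e3, e4⟩ := cl_hd S h2 h4 h5
      refine ⟨fun y => - VV W y s, -wt, -wxx, ?_, e2.neg, e3.neg, by linarith⟩
      filter_upwards [Ioo_mem_nhds h4 h5] with z hz
      obtain ⟨_, _, e1, _⟩ := cl_hd S h2 hz.1 hz.2
      exact e1.neg
  · rw [cl_WTz S hh hb0 ht h1]

theorem cl_semi (S : IsClassicalSol21 h b0 u0 W b) (hh : 0 < h) (hb0 : 0 < b0)
    (hu : ∀ x, 0 < x → x < b0 → 0 ≤ u0 x) (σ : ℝ) : Semi σ h (WT W b) (VV W) (bT b) := by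
  have hWc := cl_WT S hh hb0
  have hbc := cl_bT S
  have hbTpos : ∀ t, 0 < bT b t := fun t => cl_bpos S hh hb0 _ (le_max_right _ _)
  have hfl0 : ∀ t, 0 < t → VV W 0 t = -h := fun t ht => by
    have := S.2.2.2.2.2.1 t ht
    simp only [VV]; linarith
  have P1 : ∀ t, 0 < t → ∀ x, 0 < x → x < b t → HasDerivAt (fun s => ∫ y in (0:ℝ)..x, WT W b y s)
      (VV W x t + h + x / 2 * WT W b x t - 1 / 2 * ∫ y in (0:ℝ)..x, WT W b y t) t ∧
      HasDerivAt (fun s => ∫ y in (0:ℝ)..bT b s, WT W b y s)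
      (VV W (b t) t + h - 1 / 2 * ∫ y in (0:ℝ)..b t, WT W b y t) t := by
    intro t ht x hx hxb
    have ht0 : 0 < t / 2 := by linarith
    have hVc := cl_VT S hh hb0 ht0
    have hd : ∀ s, t / 2 < s → ∀ x, 0 < x → x < bT b s → ∃ wt wxx,
      HasDerivAt (fun y => WT W b y s) (VT (t / 2) W b x s) x ∧
      HasDerivAt (fun y => VT (t / 2) W b y s) wxx x ∧
      HasDerivAt (fun s => WT W b x s) wt s ∧ wt = wxx + x / 2 * VT (t / 2) W b x s := by
      intro s hs x hx hxb
      have hs0 : 0 < s := ht0.trans hs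
      rw [bT_eq hs0.le] at hxb
      obtain ⟨wt, wxx, e1, e2, e3, e4⟩ := cl_hd S hs0 hx hxb
      rw [VT_eq hs.le hx.le hxb.le]
      refine ⟨wt, wxx, e1, e2.congr_of_eventuallyEq ?_, e3, e4⟩
      filter_upwards [Ioo_mem_nhds hx hxb] with y hy
      exact VT_eq hs.le hy.1.le hy.2.le
    have hfl : ∀ s, VT (t / 2) W b 0 s = -h := by
      intro s
      have hm : 0 < max s (t / 2) := lt_max_of_lt_right ht0
      rw [VT, max_self, min_eq_left (cl_bpos S hh hb0 _ hm.le).le, hfl0 _ hm]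
    have htt : t / 2 < t := by linarith
    have bt := bT_eq (b := b) ht.le
    have q1 := P_deriv hWc hVc hbc hd hfl htt hx (by rwa [bt])
    have hbd : HasDerivAt (bT b) (deriv b t) t := (cl_bderiv S ht).congr_of_eventuallyEq (by
      filter_upwards [lt_mem_nhds ht] with s hs
      exact bT_eq hs.le)
    have q2 := m_deriv hWc hVc hd hfl htt hbd (hbTpos t) (by rw [bt]; exact cl_WTz S hh hb0 ht.le le_rfl)
    constructor
    · rw [Th, VT_eq htt.le hx.le hxb.le] at q1; exact q1
    · rw [Th, bt, VT_eq htt.le (cl_bpos S hh hb0 t ht.le).le le_rfl,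
        cl_WTz S hh hb0 ht.le le_rfl, mul_zero, add_zero] at q2
      exact q2
  have hbd : ∀ t, 0 < t → HasDerivAt (bT b) (deriv b t) t := fun t ht =>
    (cl_bderiv S ht).congr_of_eventuallyEq (by
      filter_upwards [lt_mem_nhds ht] with s hs
      exact bT_eq hs.le)
  have hst : ∀ t, 0 < t → deriv b t = - VV W (b t) t - b t / 2 := fun t ht => by
    have := S.2.2.2.2.2.2.2.1 t ht
    simp only [VV]; linarith
  refine ⟨hWc, hbc, fun t _ => hbTpos t, cl_nonneg S hh hb0 hu, ?_, ?_, ?_, ?_, ?_⟩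
  · intro x t ht hx
    rw [bT_eq ht] at hx
    exact cl_WTz S hh hb0 ht hx
  · intro t ht x hx hxb
    rw [bT_eq ht.le] at hxb
    obtain ⟨wt, wxx, e1, e2, e3, e4⟩ := cl_hd S ht hx hxb
    exact ⟨wt, wxx, e1, e2, e3, by rw [e4]; simp⟩
  · intro t ht
    rw [hfl0 t ht]
    exact ⟨cl_flux S hh hb0 ht, by simp⟩
  · intro t ht
    have hb := cl_bpos S hh hb0 t ht.le
    have h1 := (P1 t ht (b t / 2) (by linarith) (by linarith)).2
    refine ⟨_, ((hbd t ht).add h1).congr_of_eventuallyEq (Eventually.of_forall fun s => ?_), ?_⟩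
    · simp only [MM, Pi.add_apply, sub_zero, max_eq_left (hbTpos s).le]
    · simp only [MM, bT_eq ht.le, sub_zero, max_eq_left hb.le, hst t ht]
      apply le_of_eq; ring
  · intro t ht x hx hxb
    have hb := cl_bpos S hh hb0 t ht.le
    have hev : ∀ᶠ s in 𝓝 t, x < bT b s := hbc.continuousAt.eventually (lt_mem_nhds hxb)
    rw [bT_eq ht.le] at hxb
    obtain ⟨h1, h2⟩ := P1 t ht x hx hxb
    have spl : ∀ s z, ∫ y in x..z, WT W b y s =
        (∫ y in (0:ℝ)..z, WT W b y s) - ∫ y in (0:ℝ)..x, WT W b y s := fun s z =>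
      (intervalIntegral.integral_interval_sub_left ((slice_cont hWc s).intervalIntegrable _ _)
        ((slice_cont hWc s).intervalIntegrable _ _)).symm
    refine ⟨_, (((hbd t ht).sub_const x).add (h2.sub h1)).congr_of_eventuallyEq ?_, ?_⟩
    · filter_upwards [hev] with s hs
      simp only [MM, Pi.add_apply, Pi.sub_apply, max_eq_left (sub_pos.2 hs).le, spl]
    · simp only [MM, bT_eq ht.le, max_eq_left (sub_pos.2 hxb).le, hst t ht, spl]
      apply le_of_eq; ring
end


lemma stat_semi {σ h β : ℝ} {f f' f'' : ℝ → ℝ} (hβ : 0 < β) (h1 : ∀ x, HasDerivAt f (f' x) x)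
    (h2 : ∀ x, HasDerivAt f' (f'' x) x) (hc : Continuous f'') (hfβ : f β = 0)
    (hnn : ∀ x, 0 ≤ x → x ≤ β → 0 ≤ f x)
    (hp : ∀ x, 0 < x → x < β → σ * (-f'' x - x / 2 * f' x) ≤ 0)
    (hfl : σ * (-f' 0 - h) ≤ 0) (hst : σ * (β / 2 + f' β) ≤ 0) :
    Semi σ h (fun x _ => f (min x β)) (fun x _ => f' x) (fun _ => β) := by
  have hfc : Continuous f := continuous_iff_continuousAt.2 fun x => (h1 x).continuousAt
  have hf'c : Continuous f' := continuous_iff_continuousAt.2 fun x => (h2 x).continuousAt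
  have key : ∀ x, 0 ≤ x → x ≤ β →
      σ * (f' x + x / 2 * (1 + f x) + 1 / 2 * (β - x + ∫ y in x..β, f y)) ≤ 0 := by
    intro x hx hxβ
    have e1 : ∫ y in x..β, (f'' y + y / 2 * f' y + 1 / 2 * f y) =
        (f' β + β / 2 * f β) - (f' x + x / 2 * f x) :=
      intervalIntegral.integral_eq_sub_of_hasDerivAt (f := fun y => f' y + y / 2 * f y)
        (fun y _ => ((h2 y).add (((hasDerivAt_id y).div_const 2).mul (h1 y))).congr_deriv (by
          simp only [id]; ring))
        (Continuous.intervalIntegrable (by fun_prop) _ _)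
    rw [intervalIntegral.integral_add (Continuous.intervalIntegrable (by fun_prop) _ _)
      (Continuous.intervalIntegrable (by fun_prop) _ _), intervalIntegral.integral_const_mul, hfβ] at e1
    have e2 : 0 ≤ ∫ y in x..β, σ * (f'' y + y / 2 * f' y) := by
      apply intervalIntegral.integral_nonneg hxβ
      have hcl : IsClosed {y | 0 ≤ σ * (f'' y + y / 2 * f' y)} :=
        isClosed_le continuous_const (by fun_prop)
      have hsub : Ioo 0 β ⊆ {y | 0 ≤ σ * (f'' y + y / 2 * f' y)} := by
        intro y hy
        have := hp y hy.1 hy.2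
        show 0 ≤ σ * (f'' y + y / 2 * f' y)
        linarith
      have h3 := closure_minimal hsub hcl
      rw [closure_Ioo hβ.ne] at h3
      exact fun y hy => h3 ⟨hx.trans hy.1, hy.2⟩
    rw [intervalIntegral.integral_const_mul] at e2
    have e3 : f' x + x / 2 * (1 + f x) + 1 / 2 * (β - x + ∫ y in x..β, f y)
      = (β / 2 + f' β) - ∫ y in x..β, (f'' y + y / 2 * f' y) := by linarith
    rw [e3, mul_sub]; linarith
  have hint : ∀ x, x ≤ β → ∫ y in x..β, f (min y β) = ∫ y in x..β, f y := by
    intro x hx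
    apply intervalIntegral.integral_congr
    intro y hy
    rw [uIcc_of_le hx] at hy
    simp only [min_eq_left hy.2]
  refine ⟨by fun_prop, continuous_const, fun _ _ => hβ, ?_, ?_, ?_, ?_, ?_, ?_⟩
  · intro x t hx _
    exact hnn _ (le_min hx hβ.le) (min_le_right _ _)
  · intro x t _ hx
    simp only [min_eq_right hx, hfβ]
  · intro t ht x hx hxβ
    refine ⟨0, f'' x, (h1 x).congr_of_eventuallyEq ?_, h2 x, hasDerivAt_const _ _, ?_⟩
    · filter_upwards [gt_mem_nhds hxβ] with y hy
      rw [min_eq_left hy.le]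
    · have := hp x hx hxβ
      simpa using this
  · intro t ht
    refine ⟨((h1 0).congr_of_eventuallyEq ?_).hasDerivWithinAt, hfl⟩
    filter_upwards [gt_mem_nhds hβ] with y hy
    rw [min_eq_left hy.le]
  · intro t ht
    refine ⟨0, hasDerivAt_const _ _, ?_⟩
    have := key 0 le_rfl hβ.le
    simp only [MM, hint 0 hβ.le, sub_zero, max_eq_left hβ.le] at this ⊢
    linarith
  · intro t ht x hx hxβ
    refine ⟨0, hasDerivAt_const _ _, ?_⟩
    have := key x hx.le hxβ.le
    simp only [MM, hint x hxβ.le, max_eq_left (sub_pos.2 hxβ).le, min_eq_left hxβ.le] at this ⊢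
    linarith

lemma WT_if {h b0 : ℝ} {u0 : ℝ → ℝ} {W : ℝ → ℝ → ℝ} {b : ℝ → ℝ}
    (S : IsClassicalSol21 h b0 u0 W b) (hh : 0 < h) (hb0 : 0 < b0) {x t : ℝ} (hx : 0 ≤ x) (ht : 0 ≤ t) :
    (if x ≤ b t then W x t else 0) = WT W b x t := by
  split_ifs with h1
  · exact (WT_eq ht hx h1).symm
  · exact (cl_WTz S hh hb0 ht (not_le.1 h1).le).symm

lemma min_if {f : ℝ → ℝ} {β : ℝ} (hf : f β = 0) (x : ℝ) :
    (if x ≤ β then f x else 0) = f (min x β) := by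
  split_ifs with h1
  · rw [min_eq_left h1]
  · rw [min_eq_right (not_le.1 h1).le, hf]


end

/-- Lemma 3.1 (Positivity and boundedness): with `(U_λ, b_λ)` a time-independent
lower solution and `(W̄, b̄)`, `W̄ η = (b̄/2)(b̄ - η)`, a time-independent upper
solution of (2.1) with data `(h, u0, b0)`, and `(W, b)`, `(W_low, b_low)`,
`(W_up, b_up)` the solutions of (2.1) emanating from `(u0, b0)`, `(U_λ, b_λ)`
and `(W̄, b̄)` respectively (all extended by zero), one has the chain
`0 ≤ U_λ ≤ W_low ≤ W ≤ W_up ≤ W̄ ≤ b̄²/2` and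
`0 < b_λ ≤ b_low ≤ b ≤ b_up ≤ b̄`. -/
theorem positivity_and_boundedness
    (h b0 lam htil blam bbar : ℝ) (u0 : ℝ → ℝ)
    (hh : 0 < h) (hb0 : 0 < b0) (hlam : 0 < lam)
    (hhtil : 0 < htil) (hhtilh : htil ≤ h) (hblam : 0 < blam)
    (hroot : htil = blam / 2 * Real.exp (lam * blam ^ 2 / 4))
    (Ulam : ℝ → ℝ)
    (hUlam : ∀ η, Ulam η = htil * ∫ s in η..blam, Real.exp (-(lam * s ^ 2) / 4))
    (Wbar : ℝ → ℝ) (hWbar : ∀ η, Wbar η = bbar / 2 * (bbar - η))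
    (hlow : IsTIStatLowerSol h b0 u0 Ulam blam)
    (hup : IsTIStatUpperSol h b0 u0 Wbar bbar)
    (hord1 : ∀ η ≥ (0:ℝ),
      (if η ≤ blam then Ulam η else 0) ≤ (if η ≤ b0 then u0 η else 0))
    (hord2 : ∀ η ≥ (0:ℝ),
      (if η ≤ b0 then u0 η else 0) ≤ (if η ≤ bbar then Wbar η else 0))
    (W Wlow Wup : ℝ → ℝ → ℝ) (b blow bup : ℝ → ℝ)
    (hW : IsClassicalSol21 h b0 u0 W b)
    (hWlow : IsClassicalSol21 h blam Ulam Wlow blow)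
    (hWup : IsClassicalSol21 h bbar Wbar Wup bup) :
    (∀ η ≥ (0:ℝ), ∀ τ ≥ (0:ℝ),
      0 ≤ (if η ≤ blam then Ulam η else 0) ∧
      (if η ≤ blam then Ulam η else 0) ≤ (if η ≤ blow τ then Wlow η τ else 0) ∧
      (if η ≤ blow τ then Wlow η τ else 0) ≤ (if η ≤ b τ then W η τ else 0) ∧
      (if η ≤ b τ then W η τ else 0) ≤ (if η ≤ bup τ then Wup η τ else 0) ∧
      (if η ≤ bup τ then Wup η τ else 0) ≤ (if η ≤ bbar then Wbar η else 0) ∧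
      (if η ≤ bbar then Wbar η else 0) ≤ bbar ^ 2 / 2) ∧
    (∀ τ ≥ (0:ℝ),
      0 < blam ∧ blam ≤ blow τ ∧ blow τ ≤ b τ ∧ b τ ≤ bup τ ∧ bup τ ≤ bbar) := by
  have hUb : Ulam blam = 0 := hlow.2.2.1
  have hexpc : Continuous fun s : ℝ => Real.exp (-(lam * s ^ 2) / 4) := by fun_prop
  have hU1 : ∀ x, HasDerivAt Ulam (htil * -Real.exp (-(lam * x ^ 2) / 4)) x := by
    intro x
    have e : Ulam = fun η => htil * ∫ s in η..blam, Real.exp (-(lam * s ^ 2) / 4) := funext hUlam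
    rw [e]
    exact (intervalIntegral.integral_hasDerivAt_left (hexpc.intervalIntegrable _ _)
      (hexpc.stronglyMeasurableAtFilter _ _) hexpc.continuousAt).const_mul htil
  have hU1d : deriv Ulam = fun x => htil * -Real.exp (-(lam * x ^ 2) / 4) :=
    funext fun x => (hU1 x).deriv
  have hU2 : ∀ x, HasDerivAt (fun x => htil * -Real.exp (-(lam * x ^ 2) / 4))
      (htil * (Real.exp (-(lam * x ^ 2) / 4) * (lam * x / 2))) x := by
    intro x
    have e1 : HasDerivAt (fun x : ℝ => -(lam * x ^ 2) / 4) (-(lam * (2 * x)) / 4) x := by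
      have := (((hasDerivAt_pow 2 x).const_mul lam).neg).div_const 4
      exact this.congr_deriv (by simp)
    exact (e1.exp.neg.const_mul htil).congr_deriv (by ring)
  have hUnn : ∀ x, 0 ≤ x → x ≤ blam → 0 ≤ Ulam x := by
    intro x _ hx
    rw [hUlam]
    exact mul_nonneg hhtil.le (intervalIntegral.integral_nonneg hx fun y _ => (Real.exp_pos _).le)
  have hbb : b0 ≤ bbar := hup.2.2.2.2.1
  have hlb : blam ≤ b0 := hlow.2.2.2.2.1
  have hbbar : 0 < bbar := hb0.trans_le hbb
  have hWe : Wbar = fun η => bbar / 2 * (bbar - η) := funext hWbar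
  have hB1 : ∀ x, HasDerivAt Wbar (bbar / 2 * -1) x := by
    intro x
    rw [hWe]
    exact ((hasDerivAt_id x).const_sub bbar).const_mul _
  have hB1d : deriv Wbar = fun _ => bbar / 2 * -1 := funext fun x => (hB1 x).deriv
  have hBb : Wbar bbar = 0 := hup.2.2.1
  have hBnn : ∀ x, 0 ≤ x → x ≤ bbar → 0 ≤ Wbar x := by
    intro x _ hx
    rw [hWbar]
    exact mul_nonneg (by linarith) (by linarith)
  have hUc : Continuous Ulam := continuous_iff_continuousAt.2 fun x => (hU1 x).continuousAt
  have hBc : Continuous Wbar := continuous_iff_continuousAt.2 fun x => (hB1 x).continuousAt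
  have hU2d : ∀ x, deriv (deriv Ulam) x = htil * (Real.exp (-(lam * x ^ 2) / 4) * (lam * x / 2)) :=
    fun x => by rw [hU1d]; exact (hU2 x).deriv
  have SU : Semi 1 h (fun x _ => Ulam (min x blam))
      (fun x _ => htil * -Real.exp (-(lam * x ^ 2) / 4)) (fun _ => blam) := by
    refine stat_semi hblam hU1 hU2 (by fun_prop) hUb hUnn ?_ ?_ ?_
    · intro x hx hxb
      have := hlow.1 x ⟨hx, hxb⟩
      rw [hU2d, hU1d] at this
      linarith
    · have := hlow.2.1
      rw [hU1d] at this
      linarith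
    · have := hlow.2.2.2.1
      rw [hU1d] at this
      linarith
  have SB : Semi (-1) h (fun x _ => Wbar (min x bbar)) (fun _ _ => bbar / 2 * -1)
      (fun _ => bbar) := by
    refine stat_semi hbbar hB1 (fun x => hasDerivAt_const x _) continuous_const hBb hBnn ?_ ?_ ?_
    · intro x hx hxb
      nlinarith
    · have := hup.2.1
      rw [hB1d] at this
      linarith
    · linarith
  have hord1' : ∀ x, 0 ≤ x → x ≤ b0 → Ulam (min x blam) ≤ u0 x := by
    intro x hx hxb
    have := hord1 x hx
    rwa [min_if hUb, if_pos hxb] at this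
  have hord2' : ∀ x, 0 ≤ x → x ≤ b0 → u0 x ≤ Wbar x := by
    intro x hx hxb
    have := hord2 x hx
    rwa [if_pos hxb, if_pos (hxb.trans hbb)] at this
  have hu0 : ∀ x, 0 < x → x < b0 → 0 ≤ u0 x := fun x hx hxb =>
    (hUnn _ (le_min hx.le hblam.le) (min_le_right _ _)).trans (hord1' x hx.le hxb.le)
  have hUn' : ∀ x, 0 < x → x < blam → 0 ≤ Ulam x := fun x hx hxb => hUnn x hx.le hxb.le
  have hBn' : ∀ x, 0 < x → x < bbar → 0 ≤ Wbar x := fun x hx hxb => hBnn x hx.le hxb.le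
  have S0 := cl_semi hW hh hb0 hu0
  have S1 := cl_semi hWlow hh hblam hUn'
  have S2 := cl_semi hWup hh hbbar hBn'
  have z0 : bT b 0 = b0 := by rw [bT_eq le_rfl, hW.2.1]
  have z1 : bT blow 0 = blam := by rw [bT_eq le_rfl, hWlow.2.1]
  have z2 : bT bup 0 = bbar := by rw [bT_eq le_rfl, hWup.2.1]
  have C1 := comparison SU (S1 (-1)) (by rw [z1]) (by
    intro x hx
    rcases le_total x blam with hxb | hxb
    · simp only [min_eq_left hxb]
      exact cl_init hWlow hh hblam hUc (fun _ _ _ => le_rfl) x hx hxb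
    · simp only [min_eq_right hxb, hUb]
      exact (S1 1).Wnn x 0 hx le_rfl)
  have C2 := comparison (S1 1) (S0 (-1)) (by rw [z1, z0]; exact hlb) (by
    intro x hx
    rcases le_total x blam with hxb | hxb
    · have e1 := cl_init2 hWlow hh hblam hUc (fun _ _ _ => le_rfl) x hx hxb
      have e2 := cl_init hW hh hb0 (f := fun x => Ulam (min x blam))
        (hUc.comp (continuous_id.min continuous_const))
        (fun y h1 h2 => hord1' y h1.le h2.le) x hx (hxb.trans hlb)
      simp only [min_eq_left hxb] at e2
      exact e1.trans e2
    · rw [(S1 1).Wz x 0 le_rfl (by rw [z1]; exact hxb)]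
      exact (S0 1).Wnn x 0 hx le_rfl)
  have C3 := comparison (S0 1) (S2 (-1)) (by rw [z2, z0]; exact hbb) (by
    intro x hx
    rcases le_total x b0 with hxb | hxb
    · have e1 := cl_init2 hW hh hb0 hBc (fun y h1 h2 => hord2' y h1.le h2.le) x hx hxb
      exact e1.trans (cl_init hWup hh hbbar hBc (fun _ _ _ => le_rfl) x hx (hxb.trans hbb))
    · rw [(S0 1).Wz x 0 le_rfl (by rw [z0]; exact hxb)]
      exact (S2 1).Wnn x 0 hx le_rfl)
  have C4 := comparison (S2 1) SB (by rw [z2]) (by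
    intro x hx
    rcases le_total x bbar with hxb | hxb
    · simp only [min_eq_left hxb]
      exact cl_init2 hWup hh hbbar hBc (fun _ _ _ => le_rfl) x hx hxb
    · simp only [min_eq_right hxb, hBb]
      rw [(S2 1).Wz x 0 le_rfl (by rw [z2]; exact hxb)])
  constructor
  · intro η hη τ hτ
    rw [WT_if hW hh hb0 hη hτ, WT_if hWlow hh hblam hη hτ, WT_if hWup hh hbbar hη hτ,
      min_if hUb, min_if hBb]
    refine ⟨hUnn _ (le_min hη hblam.le) (min_le_right _ _), C1.2 τ hτ η hη, C2.2 τ hτ η hη,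
      C3.2 τ hτ η hη, C4.2 τ hτ η hη, ?_⟩
    rw [hWbar]
    nlinarith [mul_nonneg hbbar.le (le_min hη hbbar.le)]
  · intro τ hτ
    have e1 := C1.1 τ hτ
    have e2 := C2.1 τ hτ
    have e3 := C3.1 τ hτ
    have e4 := C4.1 τ hτ
    rw [bT_eq hτ] at e1 e4
    rw [bT_eq hτ, bT_eq hτ] at e2 e3
    exact ⟨hblam, e1, e2, e3, e4⟩
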